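/- arXiv:1804.05511 — 2 statements merged into one kernel-verified Lean document; each statement's English description precedes it below -/
import Mathlib

section
/- Let s ∈ ℕ, let V¹, V², V³ be mutually disjoint finite sets of equal size, let m = w*(s) + 1, and let V^1 ≻ ⋯ ≻ V^m be a sequence of m successively refined equitable partitions, each refining {V¹,V²,V³}, such that for every 1 ≤ i ≤ m the restriction V^i_h of V^i to V^h has exactly t(i) parts for each h ∈ {1,2,3}. Then there is a 3-partite 3-graph H on (V¹,V²,V³) of density exactly 2^(−s) satisfying: if (Z,E) is a ⟨2^(−70)⟩-regular partition of H and for some 1 ≤ i ≤ w(s) one has Z_3 ≺_{2^(−9)} V^i_3 and Z_2 ≺_{2^(−9)} V^i_2, then Z_1 ≺_{2^(−9)} V^{i+1}_1. -/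
open scoped Classical

noncomputable section

/-- The number of edges of a bipartite graph `G` between vertex subsets `A` and `B`. -/
def bmEdges {α β : Type*} (G : Finset (α × β)) (A : Finset α) (B : Finset β) : ℕ :=
  (G.filter fun p => p.1 ∈ A ∧ p.2 ∈ B).card

/-- The edge density of a bipartite graph `G` between `A` and `B`. -/
def bmDens {α β : Type*} (G : Finset (α × β)) (A : Finset α) (B : Finset β) : ℝ :=
  (bmEdges G A B : ℝ) / ((A.card : ℝ) * (B.card : ℝ))

/-- `⟨δ⟩`-regularity of a bipartite graph `G` on vertex classes `(A, B)`:
for all `A' ⊆ A`, `B' ⊆ B` with `|A'| ≥ δ|A|`, `|B'| ≥ δ|B|` we have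
`d_G(A',B') ≥ (1/2) d_G(A,B)`. -/
def DeltaReg {α β : Type*} (δ : ℝ) (G : Finset (α × β)) (A : Finset α) (B : Finset β) : Prop :=
  ∀ A' ⊆ A, ∀ B' ⊆ B, δ * (A.card : ℝ) ≤ (A'.card : ℝ) → δ * (B.card : ℝ) ≤ (B'.card : ℝ) →
    bmDens G A' B' ≥ (1 / 2) * bmDens G A B

/-- Szemerédi `ε`-regularity of a bipartite graph on `(A, B)`. -/
def SzReg {α β : Type*} (ε : ℝ) (G : Finset (α × β)) (A : Finset α) (B : Finset β) : Prop :=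
  ∀ A' ⊆ A, ∀ B' ⊆ B, ε * (A.card : ℝ) ≤ (A'.card : ℝ) → ε * (B.card : ℝ) ≤ (B'.card : ℝ) →
    |bmDens G A' B' - bmDens G A B| ≤ ε

/-- `P` is a partition of the finite set `S` (into nonempty parts). -/
def IsPartition {α : Type*} (P : Finset (Finset α)) (S : Finset α) : Prop :=
  (∀ p ∈ P, p.Nonempty) ∧ (∀ p ∈ P, p ⊆ S) ∧ ∀ v ∈ S, ∃! p, p ∈ P ∧ v ∈ p

/-- `Q` refines `P`: every member of `Q` is contained in a member of `P`. -/
def Refines {α : Type*} (Q P : Finset (Finset α)) : Prop :=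
  ∀ q ∈ Q, ∃ p ∈ P, q ⊆ p

/-- All parts of `P` have the same size. -/
def EquitableParts {α : Type*} (P : Finset (Finset α)) : Prop :=
  ∀ p ∈ P, ∀ q ∈ P, p.card = q.card

/-- `S ⊆_β T`, i.e. `|S \ T| < β |S|`. -/
def ApproxSub {α : Type*} [DecidableEq α] (β' : ℝ) (S T : Finset α) : Prop :=
  ((S \ T).card : ℝ) < β' * (S.card : ℝ)

/-- `S ∈_β P`, i.e. `S ⊆_β p` for some `p ∈ P`. -/
def ApproxMem {α : Type*} [DecidableEq α] (β' : ℝ) (S : Finset α) (P : Finset (Finset α)) :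
    Prop :=
  ∃ p ∈ P, ApproxSub β' S p

/-- `Q ≺_β P` for partitions `Q`, `P` of the set `S`. -/
def ApproxRefines {α : Type*} [DecidableEq α] (β' : ℝ) (Q P : Finset (Finset α))
    (S : Finset α) : Prop :=
  ∑ q ∈ Q.filter fun q => ¬ ApproxMem β' q P, (q.card : ℝ) ≤ β' * (S.card : ℝ)

/-- The vertex partition `P ∪ Q` of a bipartite graph `G` on vertex classes `(L, R)` is
`⟨δ⟩`-regular: one can add/remove at most `δ·e(G)` edges so that the bipartite graph induced
on each pair of distinct parts is `⟨δ⟩`-regular. -/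
def DeltaRegPartition {α β : Type*} [DecidableEq α] [DecidableEq β]
    (δ : ℝ) (G : Finset (α × β)) (L : Finset α) (R : Finset β)
    (P : Finset (Finset α)) (Q : Finset (Finset β)) : Prop :=
  ∃ G' : Finset (α × β), G' ⊆ L ×ˢ R ∧
    ((G' \ G).card : ℝ) + ((G \ G').card : ℝ) ≤ δ * (G.card : ℝ) ∧
    ∀ A ∈ P, ∀ B ∈ Q, DeltaReg δ G' A B

/-- The vertex partition `P ∪ Q` of a bipartite graph `G` is perfectly `⟨δ⟩`-regular:
without modifying any edges, each pair of distinct parts induces a `⟨δ⟩`-regular graph. -/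
def PerfectDeltaRegPartition {α β : Type*} (δ : ℝ) (G : Finset (α × β))
    (P : Finset (Finset α)) (Q : Finset (Finset β)) : Prop :=
  ∀ A ∈ P, ∀ B ∈ Q, DeltaReg δ G A B

/-- A 2-partition `(Z, E)` on the vertex set `S`: `Z` partitions `S`, the members of `E` are
pairwise edge-disjoint bipartite graphs between distinct parts of `Z`, and for all distinct
`Z1, Z2 ∈ Z` the complete bipartite graph `Z1 × Z2` is the union of the members of `E`
between `Z1` and `Z2`. -/
def Is2Partition {α : Type*} [DecidableEq α]
    (Z : Finset (Finset α)) (E : Finset (Finset (α × α))) (S : Finset α) : Prop :=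
  IsPartition Z S ∧
  (∀ g ∈ E, ∃ Z1 ∈ Z, ∃ Z2 ∈ Z, Z1 ≠ Z2 ∧ g ⊆ Z1 ×ˢ Z2) ∧
  (∀ g ∈ E, ∀ g' ∈ E, g ≠ g' → Disjoint g g') ∧
  ∀ Z1 ∈ Z, ∀ Z2 ∈ Z, Z1 ≠ Z2 → ∀ p ∈ Z1 ×ˢ Z2, ∃ g ∈ E, g ⊆ Z1 ×ˢ Z2 ∧ p ∈ g

/-- The parts of `Z` contained in `A` (e.g. `Z_i`, the restriction of `Z` to `V_i`). -/
def partsIn {α : Type*} [DecidableEq α] (Z : Finset (Finset α)) (A : Finset α) :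
    Finset (Finset α) :=
  Z.filter fun z => z ⊆ A

/-- The members of `E` contained in `A × B` (e.g. `E_i`). -/
def graphsIn {α : Type*} [DecidableEq α] (E : Finset (Finset (α × α))) (A B : Finset α) :
    Finset (Finset (α × α)) :=
  E.filter fun g => g ⊆ A ×ˢ B

/-- `H` is a 3-partite 3-graph on the (disjoint) vertex classes `(V1, V2, V3)`. -/
def Is3Partite {α : Type*} (H : Finset (α × α × α)) (V1 V2 V3 : Finset α) : Prop :=
  (Disjoint V1 V2 ∧ Disjoint V1 V3 ∧ Disjoint V2 V3) ∧ H ⊆ V1 ×ˢ V2 ×ˢ V3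

/-- The auxiliary bipartite graph `G_H^1` on `(V2 × V3, V1)`. -/
def GH1 {α : Type*} [DecidableEq α] (H : Finset (α × α × α)) : Finset ((α × α) × α) :=
  H.image fun t => ((t.2.1, t.2.2), t.1)

/-- The auxiliary bipartite graph `G_H^2` on `(V1 × V3, V2)`. -/
def GH2 {α : Type*} [DecidableEq α] (H : Finset (α × α × α)) : Finset ((α × α) × α) :=
  H.image fun t => ((t.1, t.2.2), t.2.1)

/-- The auxiliary bipartite graph `G_H^3` on `(V1 × V2, V3)`. -/
def GH3 {α : Type*} [DecidableEq α] (H : Finset (α × α × α)) : Finset ((α × α) × α) :=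
  H.image fun t => ((t.1, t.2.1), t.2.2)

/-- The 2-partition `(Z, E)` is `⟨δ⟩`-good: every bipartite graph in `E` (between any two
distinct vertex clusters of `Z`) is `⟨δ⟩`-regular. -/
def DeltaGood {α : Type*} [DecidableEq α] (δ : ℝ)
    (Z : Finset (Finset α)) (E : Finset (Finset (α × α))) : Prop :=
  ∀ g ∈ E, ∀ Z1 ∈ Z, ∀ Z2 ∈ Z, Z1 ≠ Z2 → g ⊆ Z1 ×ˢ Z2 → DeltaReg δ g Z1 Z2

/-- `(Z, E)` is a `⟨δ⟩`-regular partition of the 3-partite 3-graph `H` on `(V1, V2, V3)`: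
it is a `⟨δ⟩`-good 2-partition with `Z ≺ {V1, V2, V3}` and, for each `1 ≤ i ≤ 3`,
`E_i ∪ Z_i` is a `⟨δ⟩`-regular vertex partition of `G_H^i`. -/
def Delta3RegPartition {α : Type*} [DecidableEq α] (δ : ℝ) (H : Finset (α × α × α))
    (V1 V2 V3 : Finset α) (Z : Finset (Finset α)) (E : Finset (Finset (α × α))) : Prop :=
  Is2Partition Z E (V1 ∪ V2 ∪ V3) ∧ Refines Z {V1, V2, V3} ∧ DeltaGood δ Z E ∧
  DeltaRegPartition δ (GH1 H) (V2 ×ˢ V3) V1 (graphsIn E V2 V3) (partsIn Z V1) ∧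
  DeltaRegPartition δ (GH2 H) (V1 ×ˢ V3) V2 (graphsIn E V1 V3) (partsIn Z V2) ∧
  DeltaRegPartition δ (GH3 H) (V1 ×ˢ V2) V3 (graphsIn E V1 V2) (partsIn Z V3)

/-- The tower function: `twr 0 = 1` and `twr (x+1) = 2 ^ twr x`. -/
def twr : ℕ → ℕ
  | 0 => 1
  | n + 1 => 2 ^ twr n

/-- The wowzer function: `twr` iterated `x` times, applied to `1`. -/
def wow (x : ℕ) : ℕ := twr^[x] 1

/-- The set of triangles of the triad given by bipartite graphs `e1`, `e2`, `e3`: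
triples `(a, b, c)` with `(a,b) ∈ e1`, `(a,c) ∈ e2` and `(b,c) ∈ e3`. -/
def tri {α β γ : Type*} [DecidableEq α] [DecidableEq β] [DecidableEq γ]
    (e1 : Finset (α × β)) (e2 : Finset (α × γ)) (e3 : Finset (β × γ)) :
    Finset (α × β × γ) :=
  ((e1 ×ˢ e3).filter fun q => q.1.2 = q.2.1 ∧ (q.1.1, q.2.2) ∈ e2).image
    fun q => (q.1.1, q.1.2, q.2.2)

/-- The density `d_H(P)` of a triad `P = (e1, e2, e3)` in the 3-graph `H`. -/
def triDens {α : Type*} [DecidableEq α] (H : Finset (α × α × α))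
    (e1 e2 e3 : Finset (α × α)) : ℝ :=
  ((H ∩ tri e1 e2 e3).card : ℝ) / ((tri e1 e2 e3).card : ℝ)

/-- The triad `(e1, e2, e3)` is `ε`-regular in the 3-graph `H`: every subtriad `(f1, f2, f3)`
with `t(P') ≥ ε t(P)` satisfies `|d_H(P') - d_H(P)| ≤ ε`. -/
def TriadReg {α : Type*} [DecidableEq α] (ε : ℝ) (H : Finset (α × α × α))
    (e1 e2 e3 : Finset (α × α)) : Prop :=
  ∀ f1 ⊆ e1, ∀ f2 ⊆ e2, ∀ f3 ⊆ e3,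
    ε * ((tri e1 e2 e3).card : ℝ) ≤ ((tri f1 f2 f3).card : ℝ) →
    |triDens H f1 f2 f3 - triDens H e1 e2 e3| ≤ ε

/-- The triads of the 2-partition `(Z, E)`: triples of members of `E` forming a tripartite
graph on three distinct parts of `Z`. -/
def triads {α : Type*} [DecidableEq α] (Z : Finset (Finset α))
    (E : Finset (Finset (α × α))) :
    Finset (Finset (α × α) × Finset (α × α) × Finset (α × α)) :=
  (E ×ˢ E ×ˢ E).filter fun e => ∃ Z1 ∈ Z, ∃ Z2 ∈ Z, ∃ Z3 ∈ Z,
    Z1 ≠ Z2 ∧ Z1 ≠ Z3 ∧ Z2 ≠ Z3 ∧ e.1 ⊆ Z1 ×ˢ Z2 ∧ e.2.1 ⊆ Z1 ×ˢ Z3 ∧ e.2.2 ⊆ Z2 ×ˢ Z3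

/-- An `(ℓ, t, ε₂)`-equipartition on `S`: a 2-partition `(Z, E)` where `Z` is an equitable
partition of order `t` and every graph in `E` is `ε₂`-regular of density `ℓ⁻¹ ± ε₂`. -/
def IsEquipartition23 {α : Type*} [DecidableEq α] (ℓ t : ℕ) (ε₂ : ℝ)
    (Z : Finset (Finset α)) (E : Finset (Finset (α × α))) (S : Finset α) : Prop :=
  Is2Partition Z E S ∧ EquitableParts Z ∧ Z.card = t ∧
  ∀ g ∈ E, ∀ Z1 ∈ Z, ∀ Z2 ∈ Z, Z1 ≠ Z2 → g ⊆ Z1 ×ˢ Z2 →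
    SzReg ε₂ g Z1 Z2 ∧ |bmDens g Z1 Z2 - 1 / (ℓ : ℝ)| ≤ ε₂

/-- The `(ℓ,t,ε₂)`-equipartition `(Z, E)` is an `ε`-regular partition of the 3-graph `H`
with vertex set `S` (Frankl–Rödl): `Σ t(P) ≤ ε |S|³`, summed over non-`ε`-regular triads. -/
def FRRegPartition {α : Type*} [DecidableEq α] (ε : ℝ) (H : Finset (α × α × α))
    (S : Finset α) (Z : Finset (Finset α)) (E : Finset (Finset (α × α))) : Prop :=
  ∑ e ∈ (triads Z E).filter fun e => ¬ TriadReg ε H e.1 e.2.1 e.2.2,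
    ((tri e.1 e.2.1 e.2.2).card : ℝ) ≤ ε * (S.card : ℝ) ^ 3

/-- The function `f` from the definition of quasirandomness of a triad. -/
def fQ {α : Type*} [DecidableEq α] (H : Finset (α × α × α)) (e1 e2 e3 : Finset (α × α))
    (x y z : α) : ℝ :=
  if (x, y, z) ∈ tri e1 e2 e3 then
    (if (x, y, z) ∈ H then 1 - triDens H e1 e2 e3 else -triDens H e1 e2 e3)
  else 0

/-- The octahedron sum from the definition of quasirandomness. -/
def octSum {α : Type*} [DecidableEq α] (H : Finset (α × α × α)) (e1 e2 e3 : Finset (α × α))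
    (X Y Z : Finset α) : ℝ :=
  ∑ x0 ∈ X, ∑ x1 ∈ X, ∑ y0 ∈ Y, ∑ y1 ∈ Y, ∑ z0 ∈ Z, ∑ z1 ∈ Z,
    fQ H e1 e2 e3 x0 y0 z0 * fQ H e1 e2 e3 x0 y0 z1 * fQ H e1 e2 e3 x0 y1 z0 *
      fQ H e1 e2 e3 x0 y1 z1 * fQ H e1 e2 e3 x1 y0 z0 * fQ H e1 e2 e3 x1 y0 z1 *
      fQ H e1 e2 e3 x1 y1 z0 * fQ H e1 e2 e3 x1 y1 z1

/-- The triad `(e1, e2, e3)` on vertex classes `(X, Y, Z)` with `d(e1) = d(e2) = d(e3) = d`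
and `|X| = |Y| = |Z| = n` is `a`-quasirandom in `H`: the octahedron sum is at most
`a d¹² n⁶`. -/
def Quasirandom {α : Type*} [DecidableEq α] (a : ℝ) (H : Finset (α × α × α))
    (e1 e2 e3 : Finset (α × α)) (X Y Z : Finset α) : Prop :=
  ∀ (d : ℝ) (n : ℕ), bmDens e1 X Y = d → bmDens e2 X Z = d → bmDens e3 Y Z = d →
    X.card = n → Y.card = n → Z.card = n →
    octSum H e1 e2 e3 X Y Z ≤ a * d ^ 12 * (n : ℝ) ^ 6

/-- The `(ℓ,t,ε₂)`-equipartition `(Z, E)` is an `a`-quasirandom partition of the 3-graph `H`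
with vertex set `S`: `Σ t(P) ≤ a |S|³`, summed over non-`a`-quasirandom triads. -/
def QuasirandomPartition {α : Type*} [DecidableEq α] (a : ℝ) (H : Finset (α × α × α))
    (S : Finset α) (Z : Finset (Finset α)) (E : Finset (Finset (α × α))) : Prop :=
  ∑ e ∈ (E ×ˢ E ×ˢ E).filter fun e => ∃ Z1 ∈ Z, ∃ Z2 ∈ Z, ∃ Z3 ∈ Z,
      Z1 ≠ Z2 ∧ Z1 ≠ Z3 ∧ Z2 ≠ Z3 ∧
      e.1 ⊆ Z1 ×ˢ Z2 ∧ e.2.1 ⊆ Z1 ×ˢ Z3 ∧ e.2.2 ⊆ Z2 ×ˢ Z3 ∧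
      ¬ Quasirandom a H e.1 e.2.1 e.2.2 Z1 Z2 Z3,
    ((tri e.1 e.2.1 e.2.2).card : ℝ) ≤ a * (S.card : ℝ) ^ 3

/-- `e(i) = 2^(i+10)`. -/
def efn (i : ℕ) : ℕ := 2 ^ (i + 10)

/-- `t(1) = 2^250` and `t(i+1) = 2^(t(i)/e(i))` for `i ≥ 1`. -/
def tfn : ℕ → ℕ
  | 0 => 0
  | 1 => 2 ^ 250
  | n + 2 => 2 ^ (tfn (n + 1) / efn (n + 1))

/-- `w(1) = 1` and `w(i+1) = w*(i) = t(w(i))/e(i)` for `i ≥ 1`. -/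
def wfn : ℕ → ℕ
  | 0 => 0
  | 1 => 1
  | n + 2 => tfn (wfn (n + 1)) / efn (n + 1)

/-- `w*(s) = t(w(s))/e(s)`. -/
def wstar (s : ℕ) : ℕ := tfn (wfn s) / efn s

end

/-!
Nested partitions of two sets `L` and `R` are encoded by integer labels, and the pairs in `L × R`
are coloured recursively: at each level, the neighbourhood in `R` of every label of `L` is split in
two, and labels of `L` with the same parent split it according to different words of a random, hence
nearly orthogonal, sign code. So two points of `L` with different labels share at most 17/32 of
their neighbourhoods, and a partition of `L ∪ R` that is regular for one colour class and nearly
refines level `i` on `R` must nearly refine level `i` on `L`: otherwise many pairs of parts contain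
a large rectangle without edges. As the size of the code is exponential in the number of its
coordinates, the number of parts on `L` may be exponential in the number of parts on `R`.

The construction is applied twice: to `(V₁, V₂)`, with `V₁` one level finer than `V₂`, and then to
`(V₁ × V₂, V₃)`, with the colour classes of the first step as the partitions of `V₁ × V₂`; the
3-graph is one colour class of the second step. If `(Z, E)` is regular for it and `Z_3` nearly
refines the partition of `V₃`, then `E` nearly refines the colour classes on `V₁ × V₂`. Hence one of
these classes is nearly a union of regular graphs of `E`, so `Z_1 ∪ Z_2` is a regular partition of
that class, and near refinement passes from `V₂` to the next level of `V₁`.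
-/

section SignCode

open Finset

section RandomMap

variable {N V : Type*} [Fintype N] [Fintype V]

lemma exp_mul_sign_eq {x : ℝ} (hx : x = 1 ∨ x = -1) (θ : ℝ) :
    Real.exp (θ * x) = Real.cosh θ + x * Real.sinh θ := by
  rcases hx with rfl | rfl
  · rw [mul_one, one_mul, Real.cosh_add_sinh]
  · rw [mul_neg_one, neg_one_mul, ← sub_eq_add_neg, Real.cosh_sub_sinh]

lemma sum_exp_mul_sum_eq {f : V → ℝ} (hf : ∀ v, f v = 1 ∨ f v = -1) (hsum : ∑ v, f v = 0)
    (θ : ℝ) :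
    ∑ a : N → V, Real.exp (θ * ∑ p, f (a p)) =
      (Fintype.card V * Real.cosh θ) ^ Fintype.card N := by
  have hV : ∑ v, Real.exp (θ * f v) = Fintype.card V * Real.cosh θ := by
    simp only [fun v => exp_mul_sign_eq (hf v) θ, sum_add_distrib, ← sum_mul, hsum, sum_const,
      card_univ, nsmul_eq_mul, zero_mul, add_zero]
  calc ∑ a : N → V, Real.exp (θ * ∑ p, f (a p))
      = ∑ a : N → V, ∏ p, Real.exp (θ * f (a p)) := by simp only [mul_sum, Real.exp_sum]
    _ = ∏ _p : N, ∑ v, Real.exp (θ * f v) := by rw [prod_univ_sum, Fintype.piFinset_univ]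
    _ = _ := by rw [hV, prod_const, card_univ]

-- Markov's inequality for `exp (ε * ∑ p, f (a p))`, together with `cosh ε ≤ exp (ε ^ 2 / 2)`.
lemma card_filter_lt_sum_le {f : V → ℝ} (hf : ∀ v, f v = 1 ∨ f v = -1) (hsum : ∑ v, f v = 0)
    {ε : ℝ} (hε : 0 ≤ ε) :
    (#{a : N → V | ε * Fintype.card N < ∑ p, f (a p)} : ℝ) ≤
      Fintype.card V ^ Fintype.card N * Real.exp (-(ε ^ 2 * Fintype.card N / 2)) := by
  set n := Fintype.card N
  have hmarkov : #{a : N → V | ε * n < ∑ p, f (a p)} * Real.exp (ε ^ 2 * n) ≤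
      ∑ a : N → V, Real.exp (ε * ∑ p, f (a p)) := by
    rw [← nsmul_eq_mul]
    refine (card_nsmul_le_sum _ _ _ fun a ha => ?_).trans
      (sum_le_sum_of_subset_of_nonneg (filter_subset _ _) fun a _ _ => (Real.exp_pos _).le)
    rw [mem_filter] at ha
    exact Real.exp_le_exp.2 (by nlinarith [ha.2])
  have hcosh : (Fintype.card V * Real.cosh ε) ^ n ≤
      Fintype.card V ^ n * Real.exp (ε ^ 2 * n / 2) := by
    calc (Fintype.card V * Real.cosh ε) ^ n
        ≤ (Fintype.card V * Real.exp (ε ^ 2 / 2)) ^ n := by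
          have := (Real.cosh_pos ε).le
          gcongr
          exact Real.cosh_le_exp_half_sq ε
      _ = Fintype.card V ^ n * Real.exp (ε ^ 2 * n / 2) := by
          rw [mul_pow, ← Real.exp_nat_mul]; ring_nf
  rw [sum_exp_mul_sum_eq hf hsum] at hmarkov
  rw [← le_div_iff₀ (Real.exp_pos _)] at hmarkov
  refine hmarkov.trans ((div_le_div_of_nonneg_right hcosh (Real.exp_pos _).le).trans_eq ?_)
  rw [mul_div_assoc, ← Real.exp_sub]
  ring_nf

lemma card_filter_eq_mul_card_le {p q : N} (hpq : p ≠ q) :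
    #{a : N → V | a p = a q} * Fintype.card V ≤ Fintype.card V ^ Fintype.card N := by
  rw [← card_univ (α := V), ← card_product, card_univ, ← Fintype.card_fun, ← card_univ]
  refine card_le_card_of_injOn (fun x => Function.update x.1 p x.2) (fun _ _ => mem_univ _) ?_
  rintro ⟨a, v⟩ ha ⟨b, w⟩ hb hab
  simp only [coe_product, Set.mem_prod, mem_coe, mem_filter, mem_univ, true_and, and_true] at ha hb
  have hoff : ∀ r, r ≠ p → a r = b r := fun r hr => by
    simpa [Function.update_of_ne hr] using congrFun hab r
  have hvw : v = w := by simpa using congrFun hab p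
  have hab' : a = b := funext fun r => by
    rcases eq_or_ne r p with rfl | hr
    · rw [ha, hb, hoff q hpq.symm]
    · exact hoff r hr
  rw [hvw, hab']

lemma two_mul_card_filter_not_injective_lt (hN : 0 < Fintype.card N)
    (hV : 2 * Fintype.card N ^ 2 ≤ Fintype.card V) :
    2 * #{a : N → V | ¬ Function.Injective a} < Fintype.card V ^ Fintype.card N := by
  set n := Fintype.card N
  set M := Fintype.card V
  have hM : 0 < M := (by positivity : 0 < 2 * n ^ 2).trans_le hV
  have hunion : #{a : N → V | ¬ Function.Injective a} ≤
      ∑ x ∈ (univ : Finset N).offDiag, #{a : N → V | a x.1 = a x.2} := by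
    refine (card_le_card fun a ha => ?_).trans card_biUnion_le
    simp only [mem_filter, mem_univ, true_and, Function.Injective, not_forall] at ha
    obtain ⟨p, q, hapq, hpq⟩ := ha
    exact mem_biUnion.2 ⟨(p, q), by simpa using hpq, by simpa using hapq⟩
  have hcount : #{a : N → V | ¬ Function.Injective a} * M ≤ (n * n - n) * M ^ n := by
    calc #{a : N → V | ¬ Function.Injective a} * M
        ≤ ∑ x ∈ (univ : Finset N).offDiag, #{a : N → V | a x.1 = a x.2} * M := by
          rw [← sum_mul]; gcongr
      _ ≤ ∑ _x ∈ (univ : Finset N).offDiag, M ^ n :=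
          sum_le_sum fun x hx => card_filter_eq_mul_card_le (mem_offDiag.1 hx).2.2
      _ = (n * n - n) * M ^ n := by
          rw [sum_const, offDiag_card, card_univ, smul_eq_mul]
  have hlt : (n * n - n) * M ^ n < n ^ 2 * M ^ n := by
    have : n * n - n < n ^ 2 := by rw [sq]; exact Nat.sub_lt (by positivity) hN
    gcongr
  refine lt_of_mul_lt_mul_right (a := M) ?_ hM.le
  nlinarith [Nat.mul_le_mul_right (M ^ n) hV]

lemma exists_injective_forall_sum_le {ι : Type*} [Fintype ι] {f : ι → V → ℝ}
    (hf : ∀ l v, f l v = 1 ∨ f l v = -1) (hsum : ∀ l, ∑ v, f l v = 0) {ε : ℝ} (hε : 0 ≤ ε)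
    (hN : 0 < Fintype.card N) (hV : 2 * Fintype.card N ^ 2 ≤ Fintype.card V)
    (hι : 2 * Fintype.card ι * Real.exp (-(ε ^ 2 * Fintype.card N / 2)) ≤ 1) :
    ∃ a : N → V, Function.Injective a ∧ ∀ l, ∑ p, f l (a p) ≤ ε * Fintype.card N := by
  by_contra! hcon
  set n := Fintype.card N
  have hcover : (univ : Finset (N → V)) ⊆ ({a | ¬ Function.Injective a} : Finset (N → V)) ∪
      univ.biUnion fun l => {a : N → V | ε * n < ∑ p, f l (a p)} := by
    intro a _
    by_cases ha : Function.Injective a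
    · obtain ⟨l, hl⟩ := hcon a ha
      exact mem_union_right _ (mem_biUnion.2 ⟨l, mem_univ _, by simpa using hl⟩)
    · exact mem_union_left _ (by simpa using ha)
  have hcard : (Fintype.card V ^ n : ℝ) ≤ #{a : N → V | ¬ Function.Injective a} +
      ∑ l, (#{a : N → V | ε * n < ∑ p, f l (a p)} : ℝ) := by
    have := ((card_le_card hcover).trans (card_union_le _ _)).trans
      (Nat.add_le_add_left card_biUnion_le _)
    rw [card_univ, Fintype.card_fun] at this
    exact_mod_cast this
  have hbiased : ∑ l, (#{a : N → V | ε * n < ∑ p, f l (a p)} : ℝ) ≤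
      Fintype.card ι * (Fintype.card V ^ n * Real.exp (-(ε ^ 2 * n / 2))) := by
    rw [← nsmul_eq_mul, ← card_univ (α := ι)]
    exact sum_le_card_nsmul _ _ _ fun l _ => card_filter_lt_sum_le (hf l) (hsum l) hε
  have hinj : 2 * (#{a : N → V | ¬ Function.Injective a} : ℝ) < Fintype.card V ^ n :=
    mod_cast two_mul_card_filter_not_injective_lt hN hV
  nlinarith [mul_le_mul_of_nonneg_left hι (by positivity : (0 : ℝ) ≤ Fintype.card V ^ n)]

end RandomMap

/-- The nontrivial character `z ↦ (-1) ^ z` of `ℤ/2`. -/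
noncomputable def bitSign : AddChar (ZMod 2) ℝ :=
  AddChar.zmodChar 2 (ζ := -1) (by norm_num)

lemma bitSign_natCast (n : ℕ) : bitSign n = (-1) ^ n :=
  AddChar.zmodChar_apply' _ n

lemma bitSign_eq_ite (z : ZMod 2) : bitSign z = if z = 0 then 1 else -1 := by
  rcases (by decide : ∀ z : ZMod 2, z = 0 ∨ z = 1) z with rfl | rfl
  · simp
  · simpa using bitSign_natCast 1

lemma bitSign_eq_or (z : ZMod 2) : bitSign z = 1 ∨ bitSign z = -1 := by
  rw [bitSign_eq_ite]
  split_ifs <;> simp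

lemma sum_bitSign_dotProduct {ι : Type*} [Fintype ι] [DecidableEq ι] {a : ι → ZMod 2} (ha : a ≠ 0) :
    ∑ v, bitSign (a ⬝ᵥ v) = 0 := by
  obtain ⟨t, ht⟩ := Function.ne_iff.1 ha
  set ψ : AddChar (ι → ZMod 2) ℝ :=
    bitSign.compAddMonoidHom (dotProductBilin (ZMod 2) (ZMod 2) a).toAddMonoidHom
  refine AddChar.sum_eq_zero_of_ne_one (ψ := ψ) (AddChar.ne_one_iff.2 ⟨Pi.single t 1, ?_⟩)
  have : ψ (Pi.single t 1) = bitSign (a t) := by simp [ψ, dotProductBilin]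
  rw [this, bitSign_eq_ite, if_neg (by simpa using ht)]
  norm_num

/-- A binary code with `2 ^ k` words indexed by `l < 2 ^ k` and coordinates indexed by `N`: any two
words agree on at most `17/32` of the coordinates, and any two coordinates, viewed as sign vectors
over all words, are orthogonal. The bit of the word `l` at the coordinate `p` is `u p l`. -/
structure IsSignCode (k : ℕ) (N : Finset ℕ) (u : ℕ → ℕ → ZMod 2) : Prop where
  corr_le : ∀ l < 2 ^ k, ∀ l' < 2 ^ k, l ≠ l' →
    ∑ p ∈ N, bitSign (u p l + u p l') ≤ #N / 16
  orthogonal : ∀ p ∈ N, ∀ p' ∈ N, p ≠ p' →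
    ∑ l ∈ range (2 ^ k), bitSign (u p l + u p' l) = 0

lemma two_mul_two_pow_mul_exp_le {k n : ℕ} (hkn : k * 1024 ≤ n) (hn : 1024 ≤ n) :
    2 * 2 ^ k * Real.exp (-((1 / 16) ^ 2 * n / 2)) ≤ 1 := by
  have hlog : Real.log 2 ≤ 1 := by linarith [Real.log_two_lt_d9]
  have htwo : (2 * 2 ^ k : ℝ) = Real.exp ((k + 1) * Real.log 2) := by
    rw [add_mul, one_mul, Real.exp_add, Real.exp_nat_mul, Real.exp_log two_pos, mul_comm]
  have hkn' : (k * 1024 : ℝ) ≤ n := mod_cast hkn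
  have hn' : (1024 : ℝ) ≤ n := mod_cast hn
  rw [htwo, ← Real.exp_add, Real.exp_le_one_iff]
  nlinarith [mul_le_mul_of_nonneg_left hlog (by positivity : (0 : ℝ) ≤ k + 1)]

lemma exists_isSignCode {k : ℕ} {N : Finset ℕ} (hk : k * 1024 ≤ #N) (hk' : 2 * #N ^ 2 ≤ 2 ^ k)
    (hN : 1024 ≤ #N) : ∃ u, IsSignCode k N u := by
  have hcard : Fintype.card (Fin k → ZMod 2) = 2 ^ k := by simp [ZMod.card]
  have add_ne_zero : ∀ {x y : Fin k → ZMod 2}, x ≠ y → x + y ≠ 0 := fun {x y} h h0 =>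
    h (by rw [eq_neg_of_add_eq_zero_left h0]; funext i; simp [ZMod.neg_eq_self_mod_two])
  obtain ⟨a, ha, hcorr⟩ := exists_injective_forall_sum_le (N := N) (V := Fin k → ZMod 2)
    (ι := {l : Fin k → ZMod 2 // l ≠ 0}) (f := fun l v => bitSign (l.1 ⬝ᵥ v)) (ε := 1 / 16)
    (fun _ _ => bitSign_eq_or _) (fun l => sum_bitSign_dotProduct l.2) (by norm_num)
    (by rw [Fintype.card_coe]; omega) (by rwa [hcard, Fintype.card_coe]) (by
      rw [Fintype.card_coe]
      refine le_trans ?_ (two_mul_two_pow_mul_exp_le hk hN)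
      gcongr
      exact_mod_cast (Fintype.card_subtype_le _).trans_eq hcard)
  obtain ⟨e⟩ : Nonempty ((Fin k → ZMod 2) ≃ Fin (2 ^ k)) := ⟨Fintype.equivFinOfCardEq hcard⟩
  let word : ℕ → Fin k → ZMod 2 := fun l => if h : l < 2 ^ k then e.symm ⟨l, h⟩ else 0
  let coord : ℕ → Fin k → ZMod 2 := fun p => if h : p ∈ N then a ⟨p, h⟩ else 0
  refine ⟨fun p l => word l ⬝ᵥ coord p, ⟨fun l hl l' hl' hne => ?_, fun p hp p' hp' hne => ?_⟩⟩
  · have hword : word l + word l' ≠ 0 := add_ne_zero (by simpa [word, hl, hl'] using hne)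
    have := hcorr ⟨_, hword⟩
    rw [Fintype.card_coe] at this
    simp only [← add_dotProduct]
    rw [← sum_coe_sort N]
    refine le_trans (le_of_eq (sum_congr rfl fun p _ => ?_)) (this.trans_eq (by ring))
    simp [coord, p.2]
  · have hcoord : coord p + coord p' ≠ 0 :=
      add_ne_zero (by simpa [coord, hp, hp', ha.eq_iff] using hne)
    simp only [← dotProduct_add]
    rw [← sum_bitSign_dotProduct hcoord, ← Fin.sum_univ_eq_sum_range
      (fun l => bitSign (word l ⬝ᵥ (coord p + coord p'))) (2 ^ k), ← Equiv.sum_comp e]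
    refine sum_congr rfl fun l _ => ?_
    simp [word, dotProduct_comm]

/-- A chosen sign code with words `l < 2 ^ k` and coordinate set `N`; the zero code if there is
none. -/
noncomputable def signCode (k : ℕ) (N : Finset ℕ) : ℕ → ℕ → ZMod 2 :=
  if h : ∃ u, IsSignCode k N u then h.choose else 0

lemma isSignCode_signCode {k : ℕ} {N : Finset ℕ} (hk : k * 1024 ≤ #N) (hk' : 2 * #N ^ 2 ≤ 2 ^ k)
    (hN : 1024 ≤ #N) : IsSignCode k N (signCode k N) := by
  have h := exists_isSignCode hk hk' hN
  rw [signCode, dif_pos h]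
  exact h.choose_spec

end SignCode

section Colouring

open Finset

/-- The label of level `i` above the label `l` of level `j`, when the labels of level `i` are the
numbers below `2 ^ m i` and each of them is split into `2 ^ (m j - m i)` consecutive labels of
level `j`. -/
def ancestor (m : ℕ → ℕ) (i j l : ℕ) : ℕ := l / 2 ^ (m j - m i)

lemma ancestor_self (m : ℕ → ℕ) (i l : ℕ) : ancestor m i i l = l := by simp [ancestor]

lemma ancestor_ancestor {m : ℕ → ℕ} {i j k : ℕ} (hij : m i ≤ m j) (hjk : m j ≤ m k) (l : ℕ) :
    ancestor m i j (ancestor m j k l) = ancestor m i k l := by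
  simp only [ancestor]
  rw [Nat.div_div_eq_div_mul, ← pow_add]
  congr 2
  omega

lemma ancestor_lt {m : ℕ → ℕ} {i j l : ℕ} (hij : m i ≤ m j) (hl : l < 2 ^ m j) :
    ancestor m i j l < 2 ^ m i := by
  rw [ancestor, Nat.div_lt_iff_lt_mul (by positivity), ← pow_add]
  rwa [Nat.add_sub_cancel' hij]

lemma ancestor_mul_add {m : ℕ → ℕ} {i j q r : ℕ} (hr : r < 2 ^ (m j - m i)) :
    ancestor m i j (q * 2 ^ (m j - m i) + r) = q := by
  rw [ancestor, mul_comm, Nat.mul_add_div (by positivity), Nat.div_eq_of_lt hr, add_zero]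

lemma ancestor_two_mul_div_two {m : ℕ → ℕ} {i j : ℕ} (hij : m i < m j) (l : ℕ) :
    ancestor m i j (2 * (l / 2)) = ancestor m i j l := by
  have : 2 ^ (m j - m i) = 2 * 2 ^ (m j - m i - 1) := by rw [← pow_succ']; congr 1; omega
  rw [ancestor, ancestor, this, ← Nat.div_div_eq_div_mul, ← Nat.div_div_eq_div_mul,
    Nat.mul_div_cancel_left _ two_pos]

/-- A nested sequence of partitions of `S`, encoded by labels: for `i ≤ s` the fibres of `f i` split
`S` into `2 ^ m i` parts of equal size, and the label of level `i` of a point is an ancestor of its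
labels of higher level. -/
structure IsLabelling {α : Type*} (S : Finset α) (m : ℕ → ℕ) (s : ℕ) (f : ℕ → α → ℕ) : Prop where
  mono : ∀ i j, i ≤ j → j ≤ s → m i ≤ m j
  lt : ∀ i ≤ s, ∀ x ∈ S, f i x < 2 ^ m i
  card_fibre : ∀ i ≤ s, ∀ r < 2 ^ m i, #{x ∈ S | f i x = r} * 2 ^ m i = #S
  ancestor_eq : ∀ i j, i ≤ j → j ≤ s → ∀ x ∈ S, ancestor m i j (f j x) = f i x

/-- The numbers of parts `2 ^ mL i` and `2 ^ mR i` for which the colouring below is defined: the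
nontrivial sizes are tied by `mL i = 2 ^ mR i / 2 ^ (i + 10)`. -/
structure AdmissibleSizes (mL mR : ℕ → ℕ) (s : ℕ) : Prop where
  left_zero : mL 0 = 0
  right_zero : mR 0 = 0
  left_mul : ∀ i, 1 ≤ i → i ≤ s → mL i * 2 ^ (i + 10) = 2 ^ mR i
  le_right : ∀ i, 1 ≤ i → i ≤ s → 246 + 4 * i ≤ mR i
  right_add_two_le : ∀ i < s, mR i + 2 ≤ mR (i + 1)

/-- The colour, a number below `2 ^ i`, of the pair of labels `(l, r)` of level `i`. Passing from
level `i` to level `i + 1`, the neighbourhood of `l` in each colour is a union of pairs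
`{2 * p, 2 * p + 1}` of labels; it is split in two by separating the labels of each pair, and the
word of a sign code belonging to `l` decides which of the two goes where. -/
noncomputable def colour (mL mR : ℕ → ℕ) : ℕ → ℕ → ℕ → ℕ
  | 0, _, _ => 0
  | i + 1, l, r =>
    let l' := ancestor mL i (i + 1) l
    let c' := colour mL mR i l' (ancestor mR i (i + 1) r)
    let N := {p ∈ range (2 ^ (mR (i + 1) - 1)) |
      colour mL mR i l' (ancestor mR i (i + 1) (2 * p)) = c'}
    2 * c' + (signCode (mL (i + 1) - mL i) N (r / 2) (l % 2 ^ (mL (i + 1) - mL i)) + r).val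

/-- The `p` for which the labels `2 * p`, `2 * p + 1` of level `i + 1` lie below a label of level
`i` joined to `l` in colour `c`. -/
noncomputable def colourPairs (mL mR : ℕ → ℕ) (i l c : ℕ) : Finset ℕ :=
  {p ∈ range (2 ^ (mR (i + 1) - 1)) | colour mL mR i l (ancestor mR i (i + 1) (2 * p)) = c}

/-- The bit deciding how the pair `p` is split between the two colours below `c` in the
neighbourhood of the label `l` of level `i + 1`. -/
noncomputable def pairBit (mL mR : ℕ → ℕ) (i l c p : ℕ) : ZMod 2 :=
  signCode (mL (i + 1) - mL i) (colourPairs mL mR i (ancestor mL i (i + 1) l) c) p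
    (l % 2 ^ (mL (i + 1) - mL i))

lemma colour_succ (mL mR : ℕ → ℕ) (i l r : ℕ) :
    colour mL mR (i + 1) l r =
      2 * colour mL mR i (ancestor mL i (i + 1) l) (ancestor mR i (i + 1) r) +
      (pairBit mL mR i l (colour mL mR i (ancestor mL i (i + 1) l) (ancestor mR i (i + 1) r))
        (r / 2) + r).val := by
  rw [colour, pairBit, colourPairs]

lemma colour_succ_div_two (mL mR : ℕ → ℕ) (i l r : ℕ) :
    colour mL mR (i + 1) l r / 2 =
      colour mL mR i (ancestor mL i (i + 1) l) (ancestor mR i (i + 1) r) := by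
  have := ZMod.val_lt (pairBit mL mR i l
    (colour mL mR i (ancestor mL i (i + 1) l) (ancestor mR i (i + 1) r)) (r / 2) + (r : ZMod 2))
  rw [colour_succ]
  omega

lemma colour_lt (mL mR : ℕ → ℕ) (i l r : ℕ) : colour mL mR i l r < 2 ^ i := by
  induction i generalizing l r with
  | zero => simp [colour]
  | succ i ih =>
    have := ih (ancestor mL i (i + 1) l) (ancestor mR i (i + 1) r)
    rw [← colour_succ_div_two] at this
    rw [pow_succ]
    omega

lemma colour_succ_eq_iff (mL mR : ℕ → ℕ) (i l r c : ℕ) :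
    colour mL mR (i + 1) l r = c ↔
      colour mL mR i (ancestor mL i (i + 1) l) (ancestor mR i (i + 1) r) = c / 2 ∧
        pairBit mL mR i l (c / 2) (r / 2) + r = c := by
  have val_eq : ∀ z : ZMod 2, 2 * (c / 2) + z.val = c ↔ z = c := fun z => by
    have := ZMod.val_lt z
    have hc := ZMod.val_natCast 2 c
    rw [← (ZMod.val_injective 2).eq_iff]
    omega
  refine ⟨fun h => ?_, fun ⟨hdiv, hbit⟩ => ?_⟩
  · have hdiv := colour_succ_div_two mL mR i l r
    rw [h] at hdiv
    rw [colour_succ, ← hdiv, val_eq] at h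
    exact ⟨hdiv.symm, h⟩
  · rw [colour_succ, hdiv, val_eq, hbit]

lemma colour_ancestor {mL mR : ℕ → ℕ} {s : ℕ} (hL : ∀ i j, i ≤ j → j ≤ s → mL i ≤ mL j)
    (hR : ∀ i j, i ≤ j → j ≤ s → mR i ≤ mR j) {i j : ℕ} (hij : i ≤ j) (hj : j ≤ s) (l r : ℕ) :
    colour mL mR i (ancestor mL i j l) (ancestor mR i j r) = colour mL mR j l r / 2 ^ (j - i) := by
  induction j, hij using Nat.le_induction generalizing l r with
  | base => simp [ancestor_self]
  | succ j hij ih =>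
    rw [← ancestor_ancestor (hL i j hij (by omega)) (hL j (j + 1) (by omega) hj),
      ← ancestor_ancestor (hR i j hij (by omega)) (hR j (j + 1) (by omega) hj), ih (by omega),
      ← colour_succ_div_two, Nat.div_div_eq_div_mul, ← pow_succ', Nat.sub_add_comm hij]

lemma two_mul_ite_sub_one_eq_bitSign (b : ZMod 2) (r c : ℕ) :
    2 * (if b + r = c then (1 : ℝ) else 0) - 1 = bitSign b * bitSign (r + c) := by
  have hbit : b + (r + c) = 0 ↔ b + r = c := by
    rw [← add_assoc, add_eq_zero_iff_eq_neg, ZMod.neg_eq_self_mod_two]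
  rw [← AddChar.map_add_eq_mul, bitSign_eq_ite, if_congr hbit rfl rfl]
  split_ifs <;> norm_num

namespace AdmissibleSizes

variable {mL mR : ℕ → ℕ} {s : ℕ}

lemma two_mul_left_le (hm : AdmissibleSizes mL mR s) {i : ℕ} (hi : i < s) :
    2 * mL i ≤ mL (i + 1) := by
  rcases i.eq_zero_or_pos with rfl | hpos
  · simp [hm.left_zero]
  · have hpow : 2 ^ (mR i + 2) ≤ 2 ^ mR (i + 1) :=
      Nat.pow_le_pow_right two_pos (hm.right_add_two_le i hi)
    rw [pow_add, ← hm.left_mul i hpos hi.le, ← hm.left_mul (i + 1) (by omega) hi,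
      show 2 ^ (i + 1 + 10) = 2 * 2 ^ (i + 10) by ring] at hpow
    nlinarith [Nat.two_pow_pos (i + 10)]

lemma left_mono (hm : AdmissibleSizes mL mR s) (i j : ℕ) (hij : i ≤ j) (hj : j ≤ s) :
    mL i ≤ mL j := by
  induction j, hij using Nat.le_induction with
  | base => rfl
  | succ j _ ih => have := hm.two_mul_left_le (i := j) (by omega); have := ih (by omega); omega

lemma two_pow_right_succ (hm : AdmissibleSizes mL mR s) {i : ℕ} (hi : i < s) :
    2 ^ mR (i + 1) = 2 * 2 ^ (mR (i + 1) - 1) := by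
  have := hm.right_add_two_le i hi
  rw [← pow_succ']
  congr 1
  omega

lemma isSignCode_of_card (hm : AdmissibleSizes mL mR s) {i : ℕ} (hi : i < s) {N : Finset ℕ}
    (hN : #N * 2 ^ (i + 1) = 2 ^ mR (i + 1)) :
    IsSignCode (mL (i + 1) - mL i) N (signCode (mL (i + 1) - mL i) N) := by
  have hbig := hm.le_right (i + 1) (by omega) hi
  have hL := hm.two_mul_left_le hi
  obtain ⟨e, he⟩ : ∃ e, mR (i + 1) = e + (i + 12) := ⟨mR (i + 1) - (i + 12), by omega⟩
  have hNe : #N = 2 ^ (e + 11) := by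
    refine Nat.eq_of_mul_eq_mul_right (Nat.two_pow_pos (i + 1)) (hN.trans ?_)
    rw [he, ← pow_add]
    ring_nf
  have hLe : mL (i + 1) = 2 ^ (e + 1) := by
    refine Nat.eq_of_mul_eq_mul_right (Nat.two_pow_pos (i + 1 + 10))
      ((hm.left_mul (i + 1) (by omega) hi).trans ?_)
    rw [he, ← pow_add]
    ring_nf
  have hexp : 2 * e + 23 ≤ 2 ^ e := by
    obtain ⟨d, rfl⟩ : ∃ d, e = d + 3 := ⟨e - 3, by omega⟩
    have := @Nat.lt_two_pow_self d
    rw [pow_add]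
    omega
  refine isSignCode_signCode ?_ ?_ ?_
  · calc (mL (i + 1) - mL i) * 1024 ≤ 2 ^ (e + 1) * 2 ^ 10 := by gcongr <;> omega
      _ = #N := by rw [hNe, ← pow_add]
  · calc 2 * #N ^ 2 = 2 ^ (2 * e + 23) := by rw [hNe]; ring
      _ ≤ 2 ^ (mL (i + 1) - mL i) := Nat.pow_le_pow_right two_pos (by rw [pow_succ] at hLe; omega)
  · rw [hNe]
    exact (by norm_num : 1024 ≤ 2 ^ 11).trans (Nat.pow_le_pow_right two_pos (by omega))

end AdmissibleSizes

end Colouring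

section Neighbourhood

open Finset

/-- The points of `R` joined in colour `c` to the label `l` of level `i`. -/
noncomputable def colourNbhd {β : Type*} (mL mR : ℕ → ℕ) (R : Finset β) (ρ : ℕ → β → ℕ)
    (i l c : ℕ) : Finset β :=
  {y ∈ R | colour mL mR i l (ρ i y) = c}

/-- The difference, up to sign, of the `h`-weights of the two fibres of `f` over the pair of labels
`{2 * p, 2 * p + 1}`. The sign is positive for the label of the parity of `c`. -/
noncomputable def pairDiscrepancy {β : Type*} (R : Finset β) (f : β → ℕ) (h : β → ℝ) (c p : ℕ) :
    ℝ :=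
  ∑ y ∈ R with f y / 2 = p, bitSign (f y + c) * h y

lemma abs_pairDiscrepancy_le {β : Type*} {R : Finset β} {h : β → ℝ}
    (hh : ∀ y ∈ R, 0 ≤ h y ∧ h y ≤ 1) (f : β → ℕ) (c p : ℕ) :
    |pairDiscrepancy R f h c p| ≤ #{y ∈ R | f y / 2 = p} := by
  refine (abs_sum_le_sum_abs _ _).trans ((sum_le_card_nsmul _ _ 1 fun y hy => ?_).trans_eq
    (by rw [nsmul_one]))
  obtain ⟨h0, h1⟩ := hh y (mem_filter.1 hy).1
  rcases bitSign_eq_or (f y + c) with hs | hs <;> rw [hs] <;> simpa [abs_of_nonneg h0]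

variable {mL mR : ℕ → ℕ} {s : ℕ} {β : Type*} {R : Finset β} {ρ : ℕ → β → ℕ} {i : ℕ}

lemma colourNbhd_succ (hR : IsLabelling R mR s ρ) (hi : i < s) (l c : ℕ) :
    colourNbhd mL mR R ρ (i + 1) l c =
      {y ∈ colourNbhd mL mR R ρ i (ancestor mL i (i + 1) l) (c / 2) |
        pairBit mL mR i l (c / 2) (ρ (i + 1) y / 2) + ρ (i + 1) y = c} := by
  rw [colourNbhd, colourNbhd, filter_filter]
  refine filter_congr fun y hy => ?_
  rw [colour_succ_eq_iff, hR.ancestor_eq i (i + 1) (by omega) hi y hy]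

lemma div_two_mem_colourPairs_iff (hm : AdmissibleSizes mL mR s) (hR : IsLabelling R mR s ρ)
    (hi : i < s) {y : β} (hy : y ∈ R) (l c : ℕ) :
    ρ (i + 1) y / 2 ∈ colourPairs mL mR i l c ↔ y ∈ colourNbhd mL mR R ρ i l c := by
  have hlt := hR.lt (i + 1) hi y hy
  rw [hm.two_pow_right_succ hi] at hlt
  rw [colourPairs, colourNbhd, mem_filter, mem_filter, mem_range,
    ancestor_two_mul_div_two (by have := hm.right_add_two_le i hi; omega),
    hR.ancestor_eq i (i + 1) (by omega) hi y hy]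
  exact and_congr_left fun _ => iff_of_true (by omega) hy

lemma sum_colourNbhd_eq_sum_colourPairs (hm : AdmissibleSizes mL mR s) (hR : IsLabelling R mR s ρ)
    (hi : i < s) (l c : ℕ) (g : β → ℝ) :
    ∑ y ∈ colourNbhd mL mR R ρ i l c, g y =
      ∑ p ∈ colourPairs mL mR i l c, ∑ y ∈ R with ρ (i + 1) y / 2 = p, g y := by
  have hsub : colourNbhd mL mR R ρ i l c ⊆ R := filter_subset _ _
  rw [← sum_fiberwise_of_maps_to (g := fun y => ρ (i + 1) y / 2) fun y hy =>
    (div_two_mem_colourPairs_iff hm hR hi (hsub hy) l c).2 hy]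
  refine sum_congr rfl fun p hp => sum_congr (ext fun y => ?_) fun _ _ => rfl
  simp only [mem_filter]
  refine and_congr_left fun hyp => ⟨fun hy => hsub hy, fun hy => ?_⟩
  rw [← div_two_mem_colourPairs_iff hm hR hi hy, hyp]
  exact hp

-- One refinement step: a label keeps or flips each pair in its neighbourhood according to its word.
lemma two_mul_sum_colourNbhd_succ_sub (hm : AdmissibleSizes mL mR s) (hR : IsLabelling R mR s ρ)
    (hi : i < s) (l c : ℕ) (h : β → ℝ) :
    2 * ∑ y ∈ colourNbhd mL mR R ρ (i + 1) l c, h y -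
        ∑ y ∈ colourNbhd mL mR R ρ i (ancestor mL i (i + 1) l) (c / 2), h y =
      ∑ p ∈ colourPairs mL mR i (ancestor mL i (i + 1) l) (c / 2),
        bitSign (pairBit mL mR i l (c / 2) p) * pairDiscrepancy R (ρ (i + 1)) h c p := by
  rw [colourNbhd_succ hR hi, sum_filter, mul_sum, ← sum_sub_distrib,
    sum_colourNbhd_eq_sum_colourPairs hm hR hi]
  refine sum_congr rfl fun p _ => ?_
  rw [pairDiscrepancy, mul_sum]
  refine sum_congr rfl fun y hy => ?_
  rw [← mul_assoc, ← (mem_filter.1 hy).2, ← two_mul_ite_sub_one_eq_bitSign]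
  split_ifs <;> ring

lemma card_fibre_pair (hm : AdmissibleSizes mL mR s) (hR : IsLabelling R mR s ρ)
    (hi : i < s) {p : ℕ} (hp : p < 2 ^ (mR (i + 1) - 1)) :
    (#{y ∈ R | ρ (i + 1) y / 2 = p} : ℝ) = 2 * (#R / 2 ^ mR (i + 1)) ∧
      ∑ y ∈ R with ρ (i + 1) y / 2 = p, bitSign (ρ (i + 1) y) = 0 := by
  have hpow := hm.two_pow_right_succ hi
  have hfibre : ∀ r < 2 ^ mR (i + 1),
      (#{y ∈ R | ρ (i + 1) y = r} : ℝ) = #R / 2 ^ mR (i + 1) := fun r hr => by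
    rw [eq_div_iff (by positivity)]
    exact_mod_cast hR.card_fibre (i + 1) hi r hr
  have hsplit : ({y ∈ R | ρ (i + 1) y / 2 = p} : Finset β) =
      {y ∈ R | ρ (i + 1) y = 2 * p} ∪ {y ∈ R | ρ (i + 1) y = 2 * p + 1} := by
    rw [← filter_or]
    exact filter_congr fun y _ => by omega
  have hdisj : Disjoint ({y ∈ R | ρ (i + 1) y = 2 * p} : Finset β)
      {y ∈ R | ρ (i + 1) y = 2 * p + 1} := by
    rw [disjoint_filter]
    omega
  have hconst : ∀ r, ∑ y ∈ R with ρ (i + 1) y = r, bitSign (ρ (i + 1) y) =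
      #{y ∈ R | ρ (i + 1) y = r} * (-1) ^ r := fun r => by
    rw [← nsmul_eq_mul]
    exact sum_eq_card_nsmul fun y hy => by rw [(mem_filter.1 hy).2, bitSign_natCast]
  rw [hsplit, card_union_of_disjoint hdisj, sum_union hdisj, hconst, hconst]
  push_cast
  rw [hfibre _ (by omega), hfibre _ (by omega), pow_succ, pow_mul]
  exact ⟨by ring, by norm_num⟩

lemma pairDiscrepancy_eq_zero (hm : AdmissibleSizes mL mR s) (hR : IsLabelling R mR s ρ)
    (hi : i < s) (H : ℕ → ℝ) (c : ℕ) {p : ℕ} (hp : p < 2 ^ (mR (i + 1) - 1)) :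
    pairDiscrepancy R (ρ (i + 1)) (fun y => H (ρ (i + 1) y / 2)) c p = 0 := by
  calc pairDiscrepancy R (ρ (i + 1)) (fun y => H (ρ (i + 1) y / 2)) c p
      = ∑ y ∈ R with ρ (i + 1) y / 2 = p, bitSign (ρ (i + 1) y) * (bitSign c * H p) := by
        refine sum_congr rfl fun y hy => ?_
        simp only [(mem_filter.1 hy).2, AddChar.map_add_eq_mul, mul_assoc]
    _ = 0 := by rw [← sum_mul, (card_fibre_pair hm hR hi hp).2, zero_mul]

-- A function of the label of level `i` is constant on the pairs of level `i + 1`.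
lemma two_mul_sum_colourNbhd_succ (hm : AdmissibleSizes mL mR s) (hR : IsLabelling R mR s ρ)
    (hi : i < s) (H : ℕ → ℝ) (l c : ℕ) :
    2 * ∑ y ∈ colourNbhd mL mR R ρ (i + 1) l c, H (ρ i y) =
      ∑ y ∈ colourNbhd mL mR R ρ i (ancestor mL i (i + 1) l) (c / 2), H (ρ i y) := by
  have hpair : ∀ y ∈ R, H (ρ i y) = H (ancestor mR i (i + 1) (2 * (ρ (i + 1) y / 2))) :=
    fun y hy => by
      rw [ancestor_two_mul_div_two (by have := hm.right_add_two_le i hi; omega),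
        hR.ancestor_eq i (i + 1) (by omega) hi y hy]
  rw [← sub_eq_zero, two_mul_sum_colourNbhd_succ_sub hm hR hi l c fun y => H (ρ i y)]
  refine sum_eq_zero fun p hp => ?_
  rw [pairDiscrepancy, sum_congr rfl fun y hy => by rw [hpair y (mem_filter.1 hy).1]]
  rw [← pairDiscrepancy, pairDiscrepancy_eq_zero hm hR hi
    (fun q => H (ancestor mR i (i + 1) (2 * q))) c (mem_range.1 (mem_filter.1 hp).1), mul_zero]

lemma two_pow_mul_sum_colourNbhd (hm : AdmissibleSizes mL mR s) (hR : IsLabelling R mR s ρ)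
    (H : ℕ → ℝ) {j : ℕ} (hij : i ≤ j) (hj : j ≤ s) (l c : ℕ) :
    2 ^ (j - i) * ∑ y ∈ colourNbhd mL mR R ρ j l c, H (ρ i y) =
      ∑ y ∈ colourNbhd mL mR R ρ i (ancestor mL i j l) (c / 2 ^ (j - i)), H (ρ i y) := by
  induction j, hij using Nat.le_induction generalizing l c with
  | base => simp [ancestor_self]
  | succ j hij ih =>
    have hstep := two_mul_sum_colourNbhd_succ hm hR (i := j) (by omega)
      (fun r => H (ancestor mR i j r)) l c
    have hlevel : ∀ k l c, ∑ y ∈ colourNbhd mL mR R ρ k l c, H (ancestor mR i j (ρ j y)) =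
        ∑ y ∈ colourNbhd mL mR R ρ k l c, H (ρ i y) := fun k l c =>
      sum_congr rfl fun y hy => by
        rw [hR.ancestor_eq i j hij (by omega) y (mem_filter.1 hy).1]
    rw [hlevel, hlevel] at hstep
    rw [Nat.sub_add_comm hij, pow_succ, mul_assoc, hstep, ih (by omega),
      ancestor_ancestor (hm.left_mono i j hij (by omega)) (hm.left_mono j (j + 1) (by omega) hj),
      Nat.div_div_eq_div_mul, pow_succ']

lemma card_colourNbhd (hm : AdmissibleSizes mL mR s) (hR : IsLabelling R mR s ρ) (hi : i ≤ s)
    (l : ℕ) {c : ℕ} (hc : c < 2 ^ i) :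
    (#(colourNbhd mL mR R ρ i l c) : ℝ) = #R / 2 ^ i := by
  have := two_pow_mul_sum_colourNbhd hm hR (fun _ => 1) (Nat.zero_le i) hi l c
  rw [eq_div_iff (by positivity), mul_comm]
  simpa [Nat.div_eq_of_lt hc, colourNbhd, colour] using this

lemma card_colourPairs (hm : AdmissibleSizes mL mR s) (hR : IsLabelling R mR s ρ)
    (hne : R.Nonempty) (hi : i < s) (l : ℕ) {c : ℕ} (hc : c < 2 ^ i) :
    #(colourPairs mL mR i l c) * 2 ^ (i + 1) = 2 ^ mR (i + 1) := by
  have hcount := sum_colourNbhd_eq_sum_colourPairs hm hR hi l c fun _ => 1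
  simp only [sum_const, nsmul_one] at hcount
  have hpair : ∀ p ∈ colourPairs mL mR i l c,
      (#{y ∈ R | ρ (i + 1) y / 2 = p} : ℝ) = 2 * (#R / 2 ^ mR (i + 1)) := fun p hp =>
    (card_fibre_pair hm hR hi (mem_range.1 (mem_filter.1 hp).1)).1
  rw [card_colourNbhd hm hR hi.le l hc, sum_congr rfl hpair, sum_const, nsmul_eq_mul] at hcount
  have : (0 : ℝ) < #R := mod_cast hne.card_pos
  have : (#(colourPairs mL mR i l c) * 2 ^ (i + 1) : ℝ) = 2 ^ mR (i + 1) := by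
    field_simp at hcount
    rw [pow_succ]
    linarith
  exact_mod_cast this

lemma isSignCode_colourPairs (hm : AdmissibleSizes mL mR s) (hR : IsLabelling R mR s ρ)
    (hne : R.Nonempty) (hi : i < s) (l : ℕ) {c : ℕ} (hc : c < 2 ^ i) :
    IsSignCode (mL (i + 1) - mL i) (colourPairs mL mR i l c)
      (signCode (mL (i + 1) - mL i) (colourPairs mL mR i l c)) :=
  hm.isSignCode_of_card hi (card_colourPairs hm hR hne hi l hc)

lemma ite_and_eq_bitSign (b₁ b₂ : ZMod 2) (r c : ℕ) :
    (if b₁ + r = c ∧ b₂ + r = c then (1 : ℝ) else 0) =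
      (1 + bitSign (b₁ + b₂)) / 4 + bitSign r * (bitSign c * (bitSign b₁ + bitSign b₂) / 4) := by
  have h₁ := two_mul_ite_sub_one_eq_bitSign b₁ r c
  have h₂ := two_mul_ite_sub_one_eq_bitSign b₂ r c
  have hsq : bitSign (r + c) * bitSign (r + c) = 1 := by
    rcases bitSign_eq_or (r + c) with h | h <;> rw [h] <;> norm_num
  have hprod : (if b₁ + r = c ∧ b₂ + r = c then (1 : ℝ) else 0) =
      (if b₁ + r = c then 1 else 0) * (if b₂ + r = c then 1 else 0) := by
    rw [ite_and, ite_mul, one_mul, zero_mul]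
  rw [AddChar.map_add_eq_mul] at h₁ h₂ hsq
  rw [hprod, AddChar.map_add_eq_mul]
  linear_combination (h₁ * (if b₂ + r = c then (1 : ℝ) else 0)) / 2 +
    h₂ * (1 + bitSign b₁ * (bitSign r * bitSign c)) / 4 + hsq * (bitSign b₁ * bitSign b₂) / 4

-- Two words agreeing on the pair `p` share exactly one of its two fibres, two words disagreeing
-- there share none.
lemma card_inter_colourNbhd_succ_of_ancestor_eq (hm : AdmissibleSizes mL mR s)
    (hR : IsLabelling R mR s ρ) (hi : i < s) {l₁ l₂ : ℕ}
    (hl : ancestor mL i (i + 1) l₁ = ancestor mL i (i + 1) l₂) (c : ℕ) :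
    (#(colourNbhd mL mR R ρ (i + 1) l₁ c ∩ colourNbhd mL mR R ρ (i + 1) l₂ c) : ℝ) =
      ∑ p ∈ colourPairs mL mR i (ancestor mL i (i + 1) l₁) (c / 2),
        (1 + bitSign (pairBit mL mR i l₁ (c / 2) p + pairBit mL mR i l₂ (c / 2) p)) / 2 *
          (#R / 2 ^ mR (i + 1)) := by
  rw [colourNbhd_succ hR hi, colourNbhd_succ hR hi, ← hl, ← filter_and, ← sum_boole,
    sum_colourNbhd_eq_sum_colourPairs hm hR hi]
  refine sum_congr rfl fun p hp => ?_
  obtain ⟨hcard, hsum⟩ := card_fibre_pair hm hR hi (mem_range.1 (mem_filter.1 hp).1)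
  set b₁ := pairBit mL mR i l₁ (c / 2) p
  set b₂ := pairBit mL mR i l₂ (c / 2) p
  calc _ = ∑ y ∈ R with ρ (i + 1) y / 2 = p, ((1 + bitSign (b₁ + b₂)) / 4 +
        bitSign (ρ (i + 1) y) * (bitSign c * (bitSign b₁ + bitSign b₂) / 4)) := by
        refine sum_congr rfl fun y hy => ?_
        rw [(mem_filter.1 hy).2, ← ite_and_eq_bitSign]
    _ = _ := by
        rw [sum_add_distrib, ← sum_mul, hsum, sum_const, nsmul_eq_mul, hcard]
        ring

lemma card_inter_colourNbhd_succ_le_of_ancestor_eq (hm : AdmissibleSizes mL mR s)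
    (hR : IsLabelling R mR s ρ) (hne : R.Nonempty) (hi : i < s) {l₁ l₂ c : ℕ} (hl : l₁ ≠ l₂)
    (hanc : ancestor mL i (i + 1) l₁ = ancestor mL i (i + 1) l₂) (hc : c < 2 ^ (i + 1)) :
    (#(colourNbhd mL mR R ρ (i + 1) l₁ c ∩ colourNbhd mL mR R ρ (i + 1) l₂ c) : ℝ) ≤
      17 / 32 * (#R / 2 ^ (i + 1)) := by
  have hc' : c / 2 < 2 ^ i := by rw [pow_succ] at hc; omega
  have hmod : l₁ % 2 ^ (mL (i + 1) - mL i) ≠ l₂ % 2 ^ (mL (i + 1) - mL i) := fun h => hl <| by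
    rw [← Nat.div_add_mod l₁ (2 ^ (mL (i + 1) - mL i)), h]
    exact (congrArg (2 ^ (mL (i + 1) - mL i) * · + _) hanc).trans (Nat.div_add_mod _ _)
  have hcorr := (isSignCode_colourPairs hm hR hne hi (ancestor mL i (i + 1) l₁) hc').corr_le
    _ (Nat.mod_lt l₁ (by positivity)) _ (Nat.mod_lt l₂ (by positivity)) hmod
  have hcard : (#(colourPairs mL mR i (ancestor mL i (i + 1) l₁) (c / 2)) : ℝ) =
      2 ^ mR (i + 1) / 2 ^ (i + 1) := by
    rw [eq_div_iff (by positivity)]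
    exact_mod_cast card_colourPairs hm hR hne hi _ hc'
  rw [card_inter_colourNbhd_succ_of_ancestor_eq hm hR hi hanc, ← sum_mul, ← sum_div,
    sum_add_distrib, sum_const, nsmul_one]
  simp only [pairBit, ← hanc]
  calc _ ≤ (17 / 16 * (2 ^ mR (i + 1) / 2 ^ (i + 1))) / 2 * (#R / 2 ^ mR (i + 1) : ℝ) := by
        gcongr
        linarith
    _ = _ := by field_simp; norm_num

lemma two_mul_card_inter_colourNbhd_succ_le (hm : AdmissibleSizes mL mR s)
    (hR : IsLabelling R mR s ρ) (hi : i < s) (l₁ l₂ c : ℕ) :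
    2 * (#(colourNbhd mL mR R ρ (i + 1) l₁ c ∩ colourNbhd mL mR R ρ (i + 1) l₂ c) : ℝ) ≤
      #(colourNbhd mL mR R ρ i (ancestor mL i (i + 1) l₁) (c / 2) ∩
        colourNbhd mL mR R ρ i (ancestor mL i (i + 1) l₂) (c / 2)) := by
  have hinter : colourNbhd mL mR R ρ (i + 1) l₁ c ∩ colourNbhd mL mR R ρ (i + 1) l₂ c ⊆
      {y ∈ colourNbhd mL mR R ρ (i + 1) l₁ c |
        colour mL mR i (ancestor mL i (i + 1) l₂) (ρ i y) = c / 2} := fun y hy => by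
    rw [mem_inter, colourNbhd_succ hR hi l₂] at hy
    exact mem_filter.2 ⟨hy.1, (mem_filter.1 (mem_filter.1 hy.2).1).2⟩
  have hhalf := two_mul_sum_colourNbhd_succ hm hR hi
    (fun r => if colour mL mR i (ancestor mL i (i + 1) l₂) r = c / 2 then 1 else 0) l₁ c
  have hfilter : ({y ∈ colourNbhd mL mR R ρ i (ancestor mL i (i + 1) l₁) (c / 2) |
        colour mL mR i (ancestor mL i (i + 1) l₂) (ρ i y) = c / 2} : Finset β) =
      colourNbhd mL mR R ρ i (ancestor mL i (i + 1) l₁) (c / 2) ∩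
        colourNbhd mL mR R ρ i (ancestor mL i (i + 1) l₂) (c / 2) := by
    rw [colourNbhd, colourNbhd, filter_filter, filter_and]
  rw [sum_boole, sum_boole, hfilter] at hhalf
  rw [← hhalf]
  gcongr

lemma card_inter_colourNbhd_le (hm : AdmissibleSizes mL mR s) (hR : IsLabelling R mR s ρ)
    (hne : R.Nonempty) (hi : i ≤ s) {l₁ l₂ c : ℕ} (h₁ : l₁ < 2 ^ mL i) (h₂ : l₂ < 2 ^ mL i)
    (hl : l₁ ≠ l₂) (hc : c < 2 ^ i) :
    (#(colourNbhd mL mR R ρ i l₁ c ∩ colourNbhd mL mR R ρ i l₂ c) : ℝ) ≤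
      17 / 32 * (#R / 2 ^ i) := by
  induction i generalizing l₁ l₂ c with
  | zero =>
    rw [hm.left_zero] at h₁ h₂
    omega
  | succ i ih =>
    by_cases hanc : ancestor mL i (i + 1) l₁ = ancestor mL i (i + 1) l₂
    · exact card_inter_colourNbhd_succ_le_of_ancestor_eq hm hR hne hi hl hanc hc
    · have hmono := hm.left_mono i (i + 1) (by omega) hi
      have hparent := ih (by omega) (ancestor_lt hmono h₁) (ancestor_lt hmono h₂) hanc
        (c := c / 2) (by rw [pow_succ] at hc; omega)
      have hhalf := two_mul_card_inter_colourNbhd_succ_le hm hR hi l₁ l₂ c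
      rw [pow_succ, ← div_div]
      linarith

end Neighbourhood

section Variance

open Finset

lemma IsSignCode.sum_sq_le {k : ℕ} {N : Finset ℕ} {u : ℕ → ℕ → ZMod 2} (hu : IsSignCode k N u)
    {d : ℕ → ℝ} {D : ℝ} (hd : ∀ p ∈ N, |d p| ≤ D) :
    ∑ l ∈ range (2 ^ k), (∑ p ∈ N, bitSign (u p l) * d p) ^ 2 ≤ 2 ^ k * (#N * D ^ 2) := by
  have hdiag : ∀ p, ∑ l ∈ range (2 ^ k), bitSign (u p l + u p l) = 2 ^ k := fun p => by
    simp [CharTwo.add_self_eq_zero]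
  calc ∑ l ∈ range (2 ^ k), (∑ p ∈ N, bitSign (u p l) * d p) ^ 2
      = ∑ p ∈ N, ∑ p' ∈ N, d p * d p' * ∑ l ∈ range (2 ^ k), bitSign (u p l + u p' l) := by
        simp only [sq, sum_mul_sum, AddChar.map_add_eq_mul]
        rw [sum_comm]
        refine sum_congr rfl fun p _ => ?_
        rw [sum_comm]
        refine sum_congr rfl fun p' _ => ?_
        rw [mul_sum]
        exact sum_congr rfl fun l _ => by ring
    _ = ∑ p ∈ N, d p * d p * 2 ^ k := sum_congr rfl fun p hp => by
        rw [sum_eq_single_of_mem p hp fun p' hp' hne => by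
          rw [hu.orthogonal p hp p' hp' hne.symm, mul_zero], hdiag]
    _ ≤ ∑ _p ∈ N, D ^ 2 * 2 ^ k := by
        gcongr with p hp
        rw [← sq]
        exact sq_le_sq' (abs_le.1 (hd p hp)).1 (abs_le.1 (hd p hp)).2
    _ = 2 ^ k * (#N * D ^ 2) := by rw [sum_const, nsmul_eq_mul]; ring

lemma IsLabelling.card_fibre_eq {α : Type*} {S : Finset α} {m : ℕ → ℕ} {s : ℕ} {f : ℕ → α → ℕ}
    (hf : IsLabelling S m s f) {i : ℕ} (hi : i ≤ s) {r : ℕ} (hr : r < 2 ^ m i) :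
    (#{x ∈ S | f i x = r} : ℝ) = #S / 2 ^ m i := by
  rw [eq_div_iff (by positivity)]
  exact_mod_cast hf.card_fibre i hi r hr

lemma IsLabelling.sum_comp {α : Type*} {S : Finset α} {m : ℕ → ℕ} {s : ℕ} {f : ℕ → α → ℕ}
    (hf : IsLabelling S m s f) {i : ℕ} (hi : i ≤ s) (g : ℕ → ℝ) :
    ∑ x ∈ S, g (f i x) = #S / 2 ^ m i * ∑ l ∈ range (2 ^ m i), g l := by
  rw [← sum_fiberwise_of_maps_to (fun x hx => mem_range.2 (hf.lt i hi x hx)), mul_sum]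
  refine sum_congr rfl fun r hr => ?_
  rw [← hf.card_fibre_eq hi (mem_range.1 hr), ← nsmul_eq_mul]
  exact sum_eq_card_nsmul fun x hx => by rw [(mem_filter.1 hx).2]

lemma sum_range_mul {M : Type*} [AddCommMonoid M] (a k : ℕ) (g : ℕ → M) :
    ∑ l ∈ range (a * k), g l = ∑ q ∈ range a, ∑ r ∈ range k, g (q * k + r) := by
  induction a with
  | zero => simp
  | succ a ih => rw [add_mul, one_mul, sum_range_add, ih, sum_range_succ]

variable {mL mR : ℕ → ℕ} {s : ℕ} {α β : Type*} {L : Finset α} {R : Finset β} {lam : ℕ → α → ℕ}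
  {ρ : ℕ → β → ℕ} {i : ℕ} {h : β → ℝ}

-- Orthogonality of the coordinates makes the sum over all siblings `l` a sum of squares.
lemma sum_sq_two_mul_sum_colourNbhd_succ_sub_le (hm : AdmissibleSizes mL mR s)
    (hR : IsLabelling R mR s ρ) (hne : R.Nonempty) (hi : i < s) (q : ℕ) {c : ℕ}
    (hc : c < 2 ^ (i + 1)) (hh : ∀ y ∈ R, 0 ≤ h y ∧ h y ≤ 1) :
    ∑ r ∈ range (2 ^ (mL (i + 1) - mL i)),
      (2 * ∑ y ∈ colourNbhd mL mR R ρ (i + 1) (q * 2 ^ (mL (i + 1) - mL i) + r) c, h y -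
        ∑ y ∈ colourNbhd mL mR R ρ i q (c / 2), h y) ^ 2 ≤
      2 ^ (mL (i + 1) - mL i) * (4 * (#R : ℝ) ^ 2 / (2 ^ (i + 1) * 2 ^ mR (i + 1))) := by
  have hc' : c / 2 < 2 ^ i := by rw [pow_succ] at hc; omega
  have hcard : (#(colourPairs mL mR i q (c / 2)) : ℝ) = 2 ^ mR (i + 1) / 2 ^ (i + 1) := by
    rw [eq_div_iff (by positivity)]
    exact_mod_cast card_colourPairs hm hR hne hi q hc'
  have hdisc : ∀ p ∈ colourPairs mL mR i q (c / 2),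
      |pairDiscrepancy R (ρ (i + 1)) h c p| ≤ 2 * (#R / 2 ^ mR (i + 1)) := fun p hp =>
    (abs_pairDiscrepancy_le hh _ c p).trans_eq
      (card_fibre_pair hm hR hi (mem_range.1 (mem_filter.1 hp).1)).1
  refine le_trans (le_of_eq (sum_congr rfl fun r hr => ?_))
    (((isSignCode_colourPairs hm hR hne hi q hc').sum_sq_le hdisc).trans_eq ?_)
  · have hanc := ancestor_mul_add (q := q) (mem_range.1 hr)
    have hstep := two_mul_sum_colourNbhd_succ_sub hm hR hi
      (q * 2 ^ (mL (i + 1) - mL i) + r) c h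
    rw [hanc] at hstep
    have hmod : (q * 2 ^ (mL (i + 1) - mL i) + r) % 2 ^ (mL (i + 1) - mL i) = r :=
      Nat.mul_add_mod_of_lt (mem_range.1 hr)
    simp only [hstep, pairBit, hanc, hmod]
  · rw [hcard]
    field_simp
    norm_num

lemma sum_sq_two_mul_sum_colourNbhd_sub_le (hm : AdmissibleSizes mL mR s)
    (hL : IsLabelling L mL s lam) (hR : IsLabelling R mR s ρ) (hne : R.Nonempty) (hi : i < s)
    {c : ℕ} (hc : c < 2 ^ (i + 1)) (hh : ∀ y ∈ R, 0 ≤ h y ∧ h y ≤ 1) :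
    ∑ x ∈ L, (2 * ∑ y ∈ colourNbhd mL mR R ρ (i + 1) (lam (i + 1) x) c, h y -
        ∑ y ∈ colourNbhd mL mR R ρ i (lam i x) (c / 2), h y) ^ 2 ≤
      #L * (4 * (#R : ℝ) ^ 2 / (2 ^ (i + 1) * 2 ^ mR (i + 1))) := by
  set K := 2 ^ (mL (i + 1) - mL i) with hK
  set B : ℝ := 4 * #R ^ 2 / (2 ^ (i + 1) * 2 ^ mR (i + 1))
  have hpow : 2 ^ mL (i + 1) = 2 ^ mL i * K := by
    rw [hK, ← pow_add, Nat.add_sub_cancel' (hm.left_mono i (i + 1) (by omega) hi)]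
  let g : ℕ → ℝ := fun l => (2 * ∑ y ∈ colourNbhd mL mR R ρ (i + 1) l c, h y -
    ∑ y ∈ colourNbhd mL mR R ρ i (ancestor mL i (i + 1) l) (c / 2), h y) ^ 2
  have hsiblings : ∀ q, ∑ r ∈ range K, g (q * K + r) ≤ K * B := fun q => by
    refine le_trans (le_of_eq (sum_congr rfl fun r hr => ?_))
      ((sum_sq_two_mul_sum_colourNbhd_succ_sub_le hm hR hne hi q hc hh).trans_eq
        (by rw [hK]; push_cast; rfl))
    simp only [g, hK, ancestor_mul_add (q := q) (mem_range.1 hr)]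
  calc _ = ∑ x ∈ L, g (lam (i + 1) x) := sum_congr rfl fun x hx => by
        simp only [g, hL.ancestor_eq i (i + 1) (by omega) hi x hx]
    _ = #L / 2 ^ mL (i + 1) * ∑ q ∈ range (2 ^ mL i), ∑ r ∈ range K, g (q * K + r) := by
        rw [hL.sum_comp hi, hpow, sum_range_mul]
    _ ≤ #L / 2 ^ mL (i + 1) * ∑ _q ∈ range (2 ^ mL i), (K * B : ℝ) := by
        gcongr with q
        exact hsiblings q
    _ = #L * B := by
        have : (2 ^ mL (i + 1) : ℝ) = 2 ^ mL i * K := mod_cast hpow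
        have hK0 : (K : ℝ) ≠ 0 := mod_cast (Nat.two_pow_pos _).ne'
        rw [sum_const, card_range, nsmul_eq_mul, this]
        push_cast
        field_simp

lemma sum_abs_two_mul_sum_colourNbhd_sub_le (hm : AdmissibleSizes mL mR s)
    (hL : IsLabelling L mL s lam) (hR : IsLabelling R mR s ρ) (hne : R.Nonempty) (hi : i < s)
    {c : ℕ} (hc : c < 2 ^ (i + 1)) (hh : ∀ y ∈ R, 0 ≤ h y ∧ h y ≤ 1) :
    ∑ x ∈ L, |2 * ∑ y ∈ colourNbhd mL mR R ρ (i + 1) (lam (i + 1) x) c, h y -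
        ∑ y ∈ colourNbhd mL mR R ρ i (lam i x) (c / 2), h y| ≤
      #L * #R / (2 ^ 124 * (2 ^ i) ^ 2) := by
  have hsq := sum_sq_two_mul_sum_colourNbhd_sub_le hm hL hR hne hi hc hh
  have hpow : (2 ^ 250 * (2 ^ i) ^ 4 : ℝ) ≤ 2 ^ mR (i + 1) := by
    rw [← pow_mul, ← pow_add]
    exact pow_le_pow_right₀ one_le_two (by have := hm.le_right (i + 1) (by omega) hi; omega)
  have hone : (1 : ℝ) ≤ 2 ^ i := one_le_pow₀ one_le_two
  refine (pow_le_pow_iff_left₀ (sum_nonneg fun _ _ => abs_nonneg _) (by positivity)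
    two_ne_zero).1 (sq_sum_le_card_mul_sum_sq.trans ?_)
  simp only [sq_abs]
  calc _ ≤ #L * (#L * (4 * (#R : ℝ) ^ 2 / (2 * (2 ^ 250 * (2 ^ i) ^ 4)))) := by
        refine mul_le_mul_of_nonneg_left (hsq.trans ?_) (by positivity)
        gcongr
        rw [pow_succ]
        linarith
    _ ≤ _ := by
        rw [div_pow, mul_pow (2 ^ 124 : ℝ), ← pow_mul (2 : ℝ) 124, ← pow_mul, ← pow_mul]
        rw [← mul_div_assoc, ← mul_div_assoc, div_le_div_iff₀ (by positivity) (by positivity)]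
        norm_num
        ring_nf
        gcongr
        norm_num

lemma sum_abs_two_pow_mul_sum_colourNbhd_sub_le (hm : AdmissibleSizes mL mR s)
    (hL : IsLabelling L mL s lam) (hR : IsLabelling R mR s ρ) (hne : R.Nonempty) {j : ℕ}
    (hj : j ≤ s) {c : ℕ} (hc : c < 2 ^ j) (hh : ∀ y ∈ R, 0 ≤ h y ∧ h y ≤ 1) :
    ∑ x ∈ L, |2 ^ j * ∑ y ∈ colourNbhd mL mR R ρ j (lam j x) c, h y - ∑ y ∈ R, h y| ≤
      #L * #R / 2 ^ 123 * (1 - 1 / 2 ^ j) := by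
  induction j generalizing c with
  | zero => simp [colourNbhd, colour, show c = 0 by simpa using hc]
  | succ j ih =>
    have hparent := ih (by omega) (c := c / 2) (by rw [pow_succ] at hc; omega)
    have hstep := sum_abs_two_mul_sum_colourNbhd_sub_le hm hL hR hne hj hc hh
    have htriangle : ∀ A B : ℝ, |2 ^ (j + 1) * A - ∑ y ∈ R, h y| ≤
        |2 ^ j * B - ∑ y ∈ R, h y| + 2 ^ j * |2 * A - B| := fun A B => by
      calc |2 ^ (j + 1) * A - ∑ y ∈ R, h y|
          = |(2 ^ j * B - ∑ y ∈ R, h y) + 2 ^ j * (2 * A - B)| := by ring_nf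
        _ ≤ _ := (abs_add_le _ _).trans_eq <| by
          rw [abs_mul, abs_of_pos (show (0 : ℝ) < 2 ^ j by positivity)]
    calc _ ≤ ∑ x ∈ L, _ := sum_le_sum fun x _ => htriangle _
          (∑ y ∈ colourNbhd mL mR R ρ j (lam j x) (c / 2), h y)
      _ ≤ #L * #R / 2 ^ 123 * (1 - 1 / 2 ^ j) +
          2 ^ j * (#L * #R / (2 ^ 124 * (2 ^ j) ^ 2)) := by
        rw [sum_add_distrib, ← mul_sum]
        gcongr
      _ = _ := by
        rw [pow_succ]
        field_simp
        ring

end Variance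

section Partition

open Finset

variable {α β : Type*} {S : Finset α} {T : Finset β} {P : Finset (Finset α)}
  {Q : Finset (Finset β)}

lemma IsPartition.nonempty (hP : IsPartition P S) {p : Finset α} (hp : p ∈ P) : p.Nonempty :=
  hP.1 p hp

lemma IsPartition.subset (hP : IsPartition P S) {p : Finset α} (hp : p ∈ P) : p ⊆ S := hP.2.1 p hp

lemma IsPartition.exists_mem (hP : IsPartition P S) {x : α} (hx : x ∈ S) : ∃ p ∈ P, x ∈ p :=
  (hP.2.2 x hx).exists

lemma IsPartition.eq_of_mem (hP : IsPartition P S) {p p' : Finset α} (hp : p ∈ P) (hp' : p' ∈ P)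
    {x : α} (hx : x ∈ p) (hx' : x ∈ p') : p = p' :=
  (hP.2.2 x (hP.subset hp hx)).unique ⟨hp, hx⟩ ⟨hp', hx'⟩

lemma IsPartition.pairwiseDisjoint (hP : IsPartition P S) :
    (P : Set (Finset α)).PairwiseDisjoint id := fun _ hp _ hp' hne =>
  disjoint_left.2 fun _ hx hx' => hne (hP.eq_of_mem hp hp' hx hx')

lemma IsPartition.sum_sum_le (hP : IsPartition P S) {B : Finset (Finset α)} (hB : B ⊆ P)
    {F : α → ℝ} (hF : ∀ x ∈ S, 0 ≤ F x) : ∑ p ∈ B, ∑ x ∈ p, F x ≤ ∑ x ∈ S, F x := by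
  refine (sum_biUnion (hP.pairwiseDisjoint.subset hB)).symm.trans_le ?_
  exact sum_le_sum_of_subset_of_nonneg (biUnion_subset.2 fun p hp => hP.subset (hB hp))
    fun x hx _ => hF x hx

lemma IsPartition.sum_card_le (hP : IsPartition P S) {B : Finset (Finset α)} (hB : B ⊆ P) :
    ∑ p ∈ B, (#p : ℝ) ≤ #S := by
  simpa using hP.sum_sum_le hB (F := fun _ => 1) fun _ _ => zero_le_one

lemma IsPartition.sum_bmEdges_le (hP : IsPartition P S) (hQ : IsPartition Q T)
    {B : Finset (Finset α × Finset β)} (hB : B ⊆ P ×ˢ Q) (K : Finset (α × β)) :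
    ∑ b ∈ B, (bmEdges K b.1 b.2 : ℝ) ≤ #K := by
  have hdisj : (B : Set (Finset α × Finset β)).PairwiseDisjoint
      fun b => K.filter fun e => e.1 ∈ b.1 ∧ e.2 ∈ b.2 := fun b hb b' hb' hne =>
    disjoint_left.2 fun e he he' => by
      have hbP := mem_product.1 (hB hb)
      have hbP' := mem_product.1 (hB hb')
      rw [mem_filter] at he he'
      exact hne (Prod.ext (hP.eq_of_mem hbP.1 hbP'.1 he.2.1 he'.2.1)
        (hQ.eq_of_mem hbP.2 hbP'.2 he.2.2 he'.2.2))
  simp only [bmEdges]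
  rw [← Nat.cast_sum, ← card_biUnion hdisj]
  exact_mod_cast card_le_card (biUnion_subset.2 fun b _ => filter_subset _ _)

/-- Up to fewer than `b * #q` points of `q`, the label `f` is constant on `q`. This is `q ∈_b 𝒫` for
the partition `𝒫` into the fibres of `f`. -/
def NearlyConstant (b : ℝ) (f : α → ℕ) (q : Finset α) : Prop :=
  ∃ r, (#{y ∈ q | f y ≠ r} : ℝ) < b * #q

/-- The relation `P ≺_b 𝒫` for the partition `𝒫` of `S` into the fibres of `f`. -/
def NearlyRefines (b : ℝ) (f : α → ℕ) (P : Finset (Finset α)) (S : Finset α) : Prop :=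
  ∑ q ∈ P with ¬ NearlyConstant b f q, (#q : ℝ) ≤ b * #S

/-- A most frequent label on `q`. -/
noncomputable def majorityLabel (f : α → ℕ) (q : Finset α) : ℕ :=
  Function.argmin fun r => #{y ∈ q | f y ≠ r}

lemma NearlyConstant.card_ne_majorityLabel_lt {b : ℝ} {f : α → ℕ} {q : Finset α}
    (h : NearlyConstant b f q) : (#{y ∈ q | f y ≠ majorityLabel f q} : ℝ) < b * #q := by
  obtain ⟨r, hr⟩ := h
  refine lt_of_le_of_lt ?_ hr
  exact_mod_cast Function.argmin_le (fun r => #{y ∈ q | f y ≠ r}) r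

/-- The points of `S` lying in no part of `P` on which `f` is nearly constant with their own label
as the majority label. -/
noncomputable def atypicalPoints (b : ℝ) (f : α → ℕ) (P : Finset (Finset α)) (S : Finset α) :
    Finset α :=
  {y ∈ S | ¬ ∃ q ∈ P, NearlyConstant b f q ∧ y ∈ q ∧ f y = majorityLabel f q}

lemma mem_atypicalPoints {b : ℝ} {f : α → ℕ} {y : α} : y ∈ atypicalPoints b f P S ↔
    y ∈ S ∧ ¬ ∃ q ∈ P, NearlyConstant b f q ∧ y ∈ q ∧ f y = majorityLabel f q :=
  mem_filter

lemma card_atypicalPoints_le {b : ℝ} {f : α → ℕ} (hP : IsPartition P S) (hb : 0 ≤ b)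
    (h : NearlyRefines b f P S) : (#(atypicalPoints b f P S) : ℝ) ≤ 2 * b * #S := by
  set bad := P.filter fun q => ¬ NearlyConstant b f q
  set good := P.filter fun q => NearlyConstant b f q
  have hsub : atypicalPoints b f P S ⊆
      bad.biUnion id ∪ good.biUnion fun q => {y ∈ q | f y ≠ majorityLabel f q} := fun y hy => by
    obtain ⟨hyS, hy⟩ := mem_atypicalPoints.1 hy
    obtain ⟨q, hq, hyq⟩ := hP.exists_mem hyS
    rw [mem_union, mem_biUnion, mem_biUnion]
    by_cases hqc : NearlyConstant b f q
    · exact .inr ⟨q, mem_filter.2 ⟨hq, hqc⟩,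
        mem_filter.2 ⟨hyq, fun heq => hy ⟨q, hq, hqc, hyq, heq⟩⟩⟩
    · exact .inl ⟨q, mem_filter.2 ⟨hq, hqc⟩, hyq⟩
  have hgood : ∑ q ∈ good, (#{y ∈ q | f y ≠ majorityLabel f q} : ℝ) ≤ b * #S :=
    calc _ ≤ ∑ q ∈ good, b * #q := sum_le_sum fun q hq =>
          (mem_filter.1 hq).2.card_ne_majorityLabel_lt.le
      _ ≤ b * #S := by
        rw [← mul_sum]
        exact mul_le_mul_of_nonneg_left (hP.sum_card_le (filter_subset _ _)) hb
  calc (#(atypicalPoints b f P S) : ℝ)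
      ≤ ∑ q ∈ bad, (#q : ℝ) + ∑ q ∈ good, (#{y ∈ q | f y ≠ majorityLabel f q} : ℝ) := by
        exact_mod_cast (card_le_card hsub).trans <| (card_union_le _ _).trans <|
          add_le_add card_biUnion_le card_biUnion_le
    _ ≤ 2 * b * #S := by
        have : ∑ q ∈ bad, (#q : ℝ) ≤ b * #S := h
        linarith

lemma DeltaReg.mul_bmEdges_le {δ γ : ℝ} {G : Finset (α × β)} {A A' : Finset α} {B B' : Finset β}
    (hreg : DeltaReg δ G A B) (hA : A' ⊆ A) (hB : B' ⊆ B) (hγ : 0 < γ) (hδγ : δ ≤ γ)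
    (hδ : δ ≤ 1 / 2) (hA' : γ * #A ≤ #A') (hB' : 1 / 2 * (#B : ℝ) ≤ #B') :
    γ / 4 * bmEdges G A B ≤ bmEdges G A' B' := by
  have hdens := hreg A' hA B' hB ((by gcongr : δ * (#A : ℝ) ≤ γ * #A).trans hA')
    ((by gcongr : δ * (#B : ℝ) ≤ 1 / 2 * #B).trans hB')
  rcases A.eq_empty_or_nonempty with rfl | hAne
  · simp [bmEdges]
  rcases B.eq_empty_or_nonempty with rfl | hBne
  · simp [bmEdges]
  have hApos : (0 : ℝ) < #A := by exact_mod_cast hAne.card_pos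
  have hBpos : (0 : ℝ) < #B := by exact_mod_cast hBne.card_pos
  have hApos' : (0 : ℝ) < #A' := lt_of_lt_of_le (by positivity) hA'
  have hBpos' : (0 : ℝ) < #B' := lt_of_lt_of_le (by positivity) hB'
  rw [bmDens, bmDens, ge_iff_le, le_div_iff₀ (by positivity)] at hdens
  calc γ / 4 * bmEdges G A B
      = 1 / 2 * (bmEdges G A B / (#A * #B)) * ((γ * #A) * (1 / 2 * #B)) := by
        field_simp
        ring
    _ ≤ 1 / 2 * (bmEdges G A B / (#A * #B)) * (#A' * #B') := by gcongr
    _ ≤ bmEdges G A' B' := hdens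

lemma bmEdges_le_bmEdges {G G' : Finset (α × β)} {A A' : Finset α} {B B' : Finset β}
    (h : ∀ x ∈ A, ∀ y ∈ B, (x, y) ∈ G → (x, y) ∈ G' ∧ x ∈ A' ∧ y ∈ B') :
    bmEdges G A B ≤ bmEdges G' A' B' :=
  card_le_card fun e he => by
    obtain ⟨heG, heA, heB⟩ := mem_filter.1 he
    exact mem_filter.2 (h e.1 heA e.2 heB heG)

lemma bmEdges_le_add_bmEdges_sdiff [DecidableEq α] [DecidableEq β] (G G' : Finset (α × β))
    (A : Finset α) (B : Finset β) : bmEdges G A B ≤ bmEdges G' A B + bmEdges (G \ G') A B := by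
  unfold bmEdges
  refine (card_le_card fun e he => ?_).trans (card_union_le _ _)
  simp only [mem_union, mem_filter, mem_sdiff] at he ⊢
  tauto

end Partition

section ColourClass

open Finset

/-- The bipartite graph between `L` and `R` formed by the pairs of colour `c` at level `j`. -/
noncomputable def colourClass {α β : Type*} (mL mR : ℕ → ℕ) (lam : ℕ → α → ℕ) (ρ : ℕ → β → ℕ)
    (j c : ℕ) (L : Finset α) (R : Finset β) : Finset (α × β) :=
  {e ∈ L ×ˢ R | colour mL mR j (lam j e.1) (ρ j e.2) = c}

/-- The points of `p` whose label of level `i` is not joined to `r` in colour `c`. -/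
noncomputable def misfits {α : Type*} (mL mR : ℕ → ℕ) (lam : ℕ → α → ℕ) (i c r : ℕ)
    (p : Finset α) : Finset α :=
  {x ∈ p | colour mL mR i (lam i x) r ≠ c}

/-- The pairs of parts `(p, q)` at which the colour class cannot be regular: `p` is not nearly
contained in a label class of level `i`, whereas `q` is, and many points of `p` are not joined in
colour `c` to that class. -/
noncomputable def conflictPairs {α β : Type*} (mL mR : ℕ → ℕ) (lam : ℕ → α → ℕ) (ρ : ℕ → β → ℕ)
    (i c : ℕ) (b γ : ℝ) (P : Finset (Finset α)) (Q : Finset (Finset β)) :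
    Finset (Finset α × Finset β) :=
  {e ∈ P ×ˢ Q | ¬ NearlyConstant γ (lam i) e.1 ∧ NearlyConstant b (ρ i) e.2 ∧
    γ / 4 * (#e.1 : ℝ) ≤ #(misfits mL mR lam i c (majorityLabel (ρ i) e.2) e.1)}

variable {mL mR : ℕ → ℕ} {s : ℕ} {α β : Type*} {L : Finset α} {R : Finset β}
  {lam : ℕ → α → ℕ} {ρ : ℕ → β → ℕ} {i j c : ℕ}

lemma bmEdges_colourClass {p : Finset α} (hp : p ⊆ L) {q : Finset β} (hq : q ⊆ R) :
    bmEdges (colourClass mL mR lam ρ j c L R) p q =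
      ∑ x ∈ p, #(colourNbhd mL mR q ρ j (lam j x) c) := by
  have hfilter : (colourClass mL mR lam ρ j c L R).filter (fun e => e.1 ∈ p ∧ e.2 ∈ q) =
      {e ∈ p ×ˢ q | colour mL mR j (lam j e.1) (ρ j e.2) = c} := by
    ext e
    simp only [colourClass, mem_filter, mem_product]
    exact ⟨fun h => ⟨h.2, h.1.2⟩, fun h => ⟨⟨⟨hp h.1.1, hq h.1.2⟩, h.2⟩, h.1⟩⟩
  rw [bmEdges, hfilter, card_filter, sum_product]
  exact sum_congr rfl fun x _ => (card_filter _ _).symm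

lemma card_colourClass (hm : AdmissibleSizes mL mR s) (hR : IsLabelling R mR s ρ) (hj : j ≤ s)
    (hc : c < 2 ^ j) : (#(colourClass mL mR lam ρ j c L R) : ℝ) = #L * (#R / 2 ^ j) := by
  have hall : (colourClass mL mR lam ρ j c L R).filter (fun e => e.1 ∈ L ∧ e.2 ∈ R) =
      colourClass mL mR lam ρ j c L R :=
    filter_true_of_mem fun e he => mem_product.1 (mem_filter.1 he).1
  have hedges := bmEdges_colourClass (mL := mL) (mR := mR) (lam := lam) (ρ := ρ) (j := j) (c := c)
    (Subset.refl L) (Subset.refl R)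
  rw [bmEdges, hall] at hedges
  rw [hedges, Nat.cast_sum, sum_congr rfl fun x _ => card_colourNbhd hm hR hj (lam j x) hc,
    sum_const, nsmul_eq_mul]

/- Points `x'` with another label than `x` share at most 17/32 of the neighbourhood of `x`. -/
lemma mul_card_ne_le_sum_card_misfits (hm : AdmissibleSizes mL mR s) (hL : IsLabelling L mL s lam)
    (hR : IsLabelling R mR s ρ) (hne : R.Nonempty) (hi : i ≤ s) (hc : c < 2 ^ i) {p : Finset α}
    (hp : p ⊆ L) {x : α} (hx : x ∈ p) :
    #{x' ∈ p | lam i x' ≠ lam i x} * (15 / 32 * (#R / 2 ^ i)) ≤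
      ∑ y ∈ colourNbhd mL mR R ρ i (lam i x) c, (#(misfits mL mR lam i c (ρ i y) p) : ℝ) := by
  have hswap : ∑ y ∈ colourNbhd mL mR R ρ i (lam i x) c, #(misfits mL mR lam i c (ρ i y) p) =
      ∑ x' ∈ p, #(colourNbhd mL mR R ρ i (lam i x) c \ colourNbhd mL mR R ρ i (lam i x') c) := by
    simp only [misfits, card_filter]
    rw [sum_comm]
    refine sum_congr rfl fun x' _ => ?_
    rw [← card_filter]
    congr 1
    ext y
    simp only [colourNbhd, mem_filter, mem_sdiff]
    tauto
  rw [← Nat.cast_sum, hswap, Nat.cast_sum, ← nsmul_eq_mul, ← sum_const]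
  refine (sum_le_sum fun x' hx' => ?_).trans
    (sum_le_sum_of_subset_of_nonneg (filter_subset _ _) fun _ _ _ => Nat.cast_nonneg _)
  obtain ⟨hxp, hlab⟩ := mem_filter.1 hx'
  have hshare := card_inter_colourNbhd_le hm hR hne hi (hL.lt i hi x' (hp hxp))
    (hL.lt i hi x (hp hx)) hlab hc
  have hsplit : (#(colourNbhd mL mR R ρ i (lam i x) c \ colourNbhd mL mR R ρ i (lam i x') c) : ℝ) +
      #(colourNbhd mL mR R ρ i (lam i x') c ∩ colourNbhd mL mR R ρ i (lam i x) c) = #R / 2 ^ i := by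
    rw [← card_colourNbhd hm hR hi (lam i x) hc, inter_comm]
    exact_mod_cast card_sdiff_add_card_inter _ _
  linarith

lemma card_div_four_le_card_filter_misfits (hm : AdmissibleSizes mL mR s)
    (hL : IsLabelling L mL s lam) (hR : IsLabelling R mR s ρ) (hne : R.Nonempty) (hi : i ≤ s)
    (hc : c < 2 ^ i) {p : Finset α} (hp : p ⊆ L) {x : α} (hx : x ∈ p) :
    (#R / 2 ^ i / 4 : ℝ) ≤ #{y ∈ colourNbhd mL mR R ρ i (lam i x) c |
      (#{x' ∈ p | lam i x' ≠ lam i x} / 4 : ℝ) ≤ #(misfits mL mR lam i c (ρ i y) p)} := by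
  set D := (#{x' ∈ p | lam i x' ≠ lam i x} : ℝ) with hD
  set N := colourNbhd mL mR R ρ i (lam i x) c
  have hle : ∀ y ∈ N, (#(misfits mL mR lam i c (ρ i y) p) : ℝ) ≤ D := fun y hy => by
    rw [hD, Nat.cast_le]
    refine card_le_card (monotone_filter_right p fun x' _ hx' heq => hx' ?_)
    rw [heq]
    exact (mem_filter.1 hy).2
  have hcard : (#N : ℝ) = #R / 2 ^ i := card_colourNbhd hm hR hi (lam i x) hc
  rcases (show 0 ≤ D from Nat.cast_nonneg _).eq_or_lt with hD0 | hDpos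
  · rw [filter_true_of_mem fun y _ => by rw [← hD0, zero_div]; exact Nat.cast_nonneg _, hcard]
    have : (0 : ℝ) ≤ #R / 2 ^ i := by positivity
    linarith
  set I := (#{y ∈ N | D / 4 ≤ #(misfits mL mR lam i c (ρ i y) p)} : ℝ) with hI
  have hmoment : D * (15 / 32 * (#R / 2 ^ i)) ≤ D * (3 / 4 * I + 1 / 4 * (#R / 2 ^ i)) := by
    calc D * (15 / 32 * (#R / 2 ^ i))
        ≤ ∑ y ∈ N, (#(misfits mL mR lam i c (ρ i y) p) : ℝ) :=
          mul_card_ne_le_sum_card_misfits hm hL hR hne hi hc hp hx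
      _ ≤ ∑ y ∈ N, (3 / 4 * D * (if D / 4 ≤ #(misfits mL mR lam i c (ρ i y) p) then 1 else 0) +
            D / 4) := sum_le_sum fun y hy => by
          have := hle y hy
          split_ifs <;> linarith
      _ = D * (3 / 4 * I + 1 / 4 * (#R / 2 ^ i)) := by
          rw [sum_add_distrib, ← mul_sum, sum_boole, ← hI, sum_const, nsmul_eq_mul, hcard]
          ring
  have : (0 : ℝ) ≤ #R / 2 ^ i := by positivity
  linarith [le_of_mul_le_mul_left hmoment hDpos]

lemma card_div_four_le_card_filter_misfits_of_le (hm : AdmissibleSizes mL mR s)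
    (hL : IsLabelling L mL s lam) (hR : IsLabelling R mR s ρ) (hne : R.Nonempty) (hij : i ≤ j)
    (hj : j ≤ s) (hc : c < 2 ^ j) {p : Finset α} (hp : p ⊆ L) {x : α} (hx : x ∈ p) :
    (#R / 2 ^ j / 4 : ℝ) ≤ #{y ∈ colourNbhd mL mR R ρ j (lam j x) c |
      (#{x' ∈ p | lam i x' ≠ lam i x} / 4 : ℝ) ≤
        #(misfits mL mR lam i (c / 2 ^ (j - i)) (ρ i y) p)} := by
  have hpow : (2 : ℝ) ^ j = 2 ^ (j - i) * 2 ^ i := by rw [← pow_add, Nat.sub_add_cancel hij]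
  have hci : c / 2 ^ (j - i) < 2 ^ i := by
    rwa [Nat.div_lt_iff_lt_mul (by positivity), ← pow_add, Nat.add_sub_cancel' hij]
  have hcoarse := card_div_four_le_card_filter_misfits hm hL hR hne (hij.trans hj) hci hp hx
  have hlift := two_pow_mul_sum_colourNbhd hm hR
    (fun r => if (#{x' ∈ p | lam i x' ≠ lam i x} / 4 : ℝ) ≤
      #(misfits mL mR lam i (c / 2 ^ (j - i)) r p) then 1 else 0) hij hj (lam j x) c
  rw [hL.ancestor_eq i j hij hj x (hp hx), sum_boole, sum_boole] at hlift
  rw [← hlift] at hcoarse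
  rw [hpow]
  calc (#R / (2 ^ (j - i) * 2 ^ i) / 4 : ℝ) = (#R / 2 ^ i / 4) / 2 ^ (j - i) := by
        field_simp
    _ ≤ _ := by rwa [div_le_iff₀' (by positivity)]

end ColourClass

section Refinement

open Finset

variable {mL mR : ℕ → ℕ} {s : ℕ} {α β : Type*} {L : Finset α} {R : Finset β}
  {lam : ℕ → α → ℕ} {ρ : ℕ → β → ℕ} {i j c : ℕ} {b δ γ : ℝ}
  {P : Finset (Finset α)} {Q : Finset (Finset β)}

lemma card_div_four_le_card_atypicalPoints_add_sum_conflictPairs (hm : AdmissibleSizes mL mR s)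
    (hL : IsLabelling L mL s lam) (hR : IsLabelling R mR s ρ) (hne : R.Nonempty) (hij : i ≤ j)
    (hj : j ≤ s) (hc : c < 2 ^ j) (hP : IsPartition P L) {p : Finset α} (hp : p ∈ P)
    (hbad : ¬ NearlyConstant γ (lam i) p) {x : α} (hx : x ∈ p) :
    (#R / 2 ^ j / 4 : ℝ) ≤ #(colourNbhd mL mR (atypicalPoints b (ρ i) Q R) ρ j (lam j x) c) +
      ∑ e ∈ conflictPairs mL mR lam ρ i (c / 2 ^ (j - i)) b γ P Q with e.1 = p,
        (#(colourNbhd mL mR e.2 ρ j (lam j x) c) : ℝ) := by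
  refine (card_div_four_le_card_filter_misfits_of_le hm hL hR hne hij hj hc (hP.subset hp)
    hx).trans ?_
  set C := (conflictPairs mL mR lam ρ i (c / 2 ^ (j - i)) b γ P Q).filter fun e => e.1 = p
  suffices hsub : {y ∈ colourNbhd mL mR R ρ j (lam j x) c | (#{x' ∈ p | lam i x' ≠ lam i x} / 4 : ℝ)
        ≤ #(misfits mL mR lam i (c / 2 ^ (j - i)) (ρ i y) p)} ⊆
      colourNbhd mL mR (atypicalPoints b (ρ i) Q R) ρ j (lam j x) c ∪
        C.biUnion fun e => colourNbhd mL mR e.2 ρ j (lam j x) c by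
    exact_mod_cast (card_le_card hsub).trans <| (card_union_le _ _).trans <|
      Nat.add_le_add_left card_biUnion_le _
  intro y hy
  obtain ⟨hyN, hmisfits⟩ := mem_filter.1 hy
  obtain ⟨hyR, hycol⟩ := mem_filter.1 hyN
  rw [mem_union, or_iff_not_imp_left]
  intro hytyp
  obtain ⟨q, hq, hqc, hyq, hyq'⟩ : ∃ q ∈ Q, NearlyConstant b (ρ i) q ∧ y ∈ q ∧
      ρ i y = majorityLabel (ρ i) q := by
    by_contra hnot
    exact hytyp (mem_filter.2 ⟨mem_filter.2 ⟨hyR, hnot⟩, hycol⟩)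
  have hspread : γ * #p ≤ (#{x' ∈ p | lam i x' ≠ lam i x} : ℝ) :=
    not_lt.1 fun hlt => hbad ⟨lam i x, hlt⟩
  refine mem_biUnion.2 ⟨(p, q), mem_filter.2 ⟨mem_filter.2 ⟨mem_product.2 ⟨hp, hq⟩, hbad, hqc, ?_⟩,
    rfl⟩, mem_filter.2 ⟨hyq, hycol⟩⟩
  rw [← hyq']
  linarith

lemma sum_card_colourNbhd_le (hm : AdmissibleSizes mL mR s) (hL : IsLabelling L mL s lam)
    (hR : IsLabelling R mR s ρ) (hne : R.Nonempty) (hj : j ≤ s) (hc : c < 2 ^ j)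
    (hP : IsPartition P L) {B : Finset (Finset α)} (hB : B ⊆ P) {R' : Finset β} (hR' : R' ⊆ R) :
    ∑ p ∈ B, ∑ x ∈ p, (#(colourNbhd mL mR R' ρ j (lam j x) c) : ℝ) ≤
      ((∑ p ∈ B, (#p : ℝ)) * #R' + #L * #R / 2 ^ 123) / 2 ^ j := by
  set h : β → ℝ := fun y => if y ∈ R' then 1 else 0
  have hnbhd : ∀ l, ∑ y ∈ colourNbhd mL mR R ρ j l c, h y = #(colourNbhd mL mR R' ρ j l c) :=
    fun l => by
      rw [sum_boole, colourNbhd, filter_comm, filter_mem_eq_inter, inter_eq_right.2 hR', colourNbhd]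
  have htotal : ∑ y ∈ R, h y = #R' := by
    rw [sum_boole, filter_mem_eq_inter, inter_eq_right.2 hR']
  have hvar := sum_abs_two_pow_mul_sum_colourNbhd_sub_le hm hL hR hne hj hc (h := h)
    fun y _ => by simp only [h]; split_ifs <;> norm_num
  simp only [hnbhd, htotal] at hvar
  have hdrop : (#L * #R / 2 ^ 123 * (1 - 1 / 2 ^ j) : ℝ) ≤ #L * #R / 2 ^ 123 :=
    mul_le_of_le_one_right (by positivity) (by linarith [show (0 : ℝ) < 1 / 2 ^ j by positivity])
  have habs := (hP.sum_sum_le hB fun x _ => abs_nonneg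
    (2 ^ j * (#(colourNbhd mL mR R' ρ j (lam j x) c) : ℝ) - #R')).trans (hvar.trans hdrop)
  rw [le_div_iff₀ (by positivity)]
  refine le_trans ?_ (add_le_add_right habs _)
  simp only [sum_mul, ← sum_add_distrib]
  refine sum_le_sum fun p _ => ?_
  rw [← nsmul_eq_mul, ← sum_const, ← sum_add_distrib]
  refine sum_le_sum fun x _ => ?_
  linarith [le_abs_self (2 ^ j * (#(colourNbhd mL mR R' ρ j (lam j x) c) : ℝ) - #R')]

lemma sum_sum_card_colourNbhd_conflictPairs (hP : IsPartition P L) (hQ : IsPartition Q R)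
    (c' : ℕ) :
    ∑ p ∈ P with ¬ NearlyConstant γ (lam i) p, ∑ x ∈ p,
        ∑ e ∈ conflictPairs mL mR lam ρ i c' b γ P Q with e.1 = p,
          (#(colourNbhd mL mR e.2 ρ j (lam j x) c) : ℝ) =
      ∑ e ∈ conflictPairs mL mR lam ρ i c' b γ P Q,
        (bmEdges (colourClass mL mR lam ρ j c L R) e.1 e.2 : ℝ) := by
  have hmaps : ∀ e ∈ conflictPairs mL mR lam ρ i c' b γ P Q,
      e.1 ∈ P.filter fun p => ¬ NearlyConstant γ (lam i) p := fun e he => by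
    obtain ⟨hePQ, he⟩ := mem_filter.1 he
    exact mem_filter.2 ⟨(mem_product.1 hePQ).1, he.1⟩
  rw [← sum_fiberwise_of_maps_to hmaps]
  refine sum_congr rfl fun p _ => ?_
  rw [sum_comm]
  refine sum_congr rfl fun e he => ?_
  obtain ⟨hemem, rfl⟩ := mem_filter.1 he
  obtain ⟨he₁, he₂⟩ := mem_product.1 (mem_filter.1 hemem).1
  rw [bmEdges_colourClass (hP.subset he₁) (hQ.subset he₂), Nat.cast_sum]

lemma card_mul_le_sum_bmEdges_conflictPairs (hm : AdmissibleSizes mL mR s)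
    (hL : IsLabelling L mL s lam) (hR : IsLabelling R mR s ρ) (hne : R.Nonempty) (hij : i ≤ j)
    (hj : j ≤ s) (hc : c < 2 ^ j) (hγ : 1 / 2 ^ 30 ≤ γ) (hP : IsPartition P L)
    (hQ : IsPartition Q R) (hQR : NearlyRefines (1 / 2 ^ 9) (ρ i) Q R)
    (hlarge : ¬ NearlyRefines γ (lam i) P L) :
    1 / 8 * ((∑ p ∈ P with ¬ NearlyConstant γ (lam i) p, (#p : ℝ)) * (#R / 2 ^ j)) ≤
      ∑ e ∈ conflictPairs mL mR lam ρ i (c / 2 ^ (j - i)) (1 / 2 ^ 9) γ P Q,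
        (bmEdges (colourClass mL mR lam ρ j c L R) e.1 e.2 : ℝ) := by
  rw [NearlyRefines, not_le] at hlarge
  set B := P.filter fun p => ¬ NearlyConstant γ (lam i) p
  have hB : B ⊆ P := filter_subset _ _
  have hR₀ : atypicalPoints (1 / 2 ^ 9) (ρ i) Q R ⊆ R := filter_subset _ _
  have hatypical := card_atypicalPoints_le hQ (by positivity) hQR
  have hvar := sum_card_colourNbhd_le hm hL hR hne hj hc hP hB hR₀
  have hlower := sum_le_sum fun p (hp : p ∈ B) => sum_le_sum fun x (hx : x ∈ p) =>
    card_div_four_le_card_atypicalPoints_add_sum_conflictPairs (b := 1 / 2 ^ 9) (Q := Q) hm hL hR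
      hne hij hj hc hP (hB hp) (mem_filter.1 hp).2 hx
  simp only [sum_add_distrib, sum_const, nsmul_eq_mul] at hlower
  rw [← sum_mul, sum_sum_card_colourNbhd_conflictPairs hP hQ] at hlower
  set X := ∑ p ∈ B, (#p : ℝ)
  set R₀ := atypicalPoints (1 / 2 ^ 9) (ρ i) Q R
  have hX : 0 ≤ X := sum_nonneg fun _ _ => Nat.cast_nonneg _
  have hLX : (#L : ℝ) ≤ 2 ^ 30 * X := by
    have := mul_le_mul_of_nonneg_right hγ (Nat.cast_nonneg #L)
    linarith
  have hexceptional : (X * #R₀ + #L * #R / 2 ^ 123) / 2 ^ j ≤ 1 / 8 * (X * (#R / 2 ^ j)) := by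
    have hXR₀ := mul_le_mul_of_nonneg_left hatypical hX
    have hLR := mul_le_mul_of_nonneg_right hLX (Nat.cast_nonneg (α := ℝ) #R)
    have : 0 ≤ X * #R := by positivity
    rw [← mul_div_assoc, ← mul_div_assoc]
    gcongr
    linarith
  linarith

variable [DecidableEq α] [DecidableEq β]

/- The misfits of `p` send no edges of the colour class to the majority label class of `q`, so the
edges that regularity forces there have been added. -/
lemma mul_bmEdges_conflictPairs_le (hL : IsLabelling L mL s lam) (hR : IsLabelling R mR s ρ)
    (hij : i ≤ j) (hj : j ≤ s) (hγ : 0 < γ) (hγ1 : γ ≤ 1) (hb : b ≤ 1 / 2) (hδγ : δ ≤ γ / 4)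
    {G' : Finset (α × β)} {p : Finset α} {q : Finset β}
    (hpq : (p, q) ∈ conflictPairs mL mR lam ρ i (c / 2 ^ (j - i)) b γ P Q)
    (hreg : DeltaReg δ G' p q) :
    γ / 16 * bmEdges (colourClass mL mR lam ρ j c L R) p q ≤
      bmEdges (G' \ colourClass mL mR lam ρ j c L R) p q +
        bmEdges (colourClass mL mR lam ρ j c L R \ G') p q := by
  set G := colourClass mL mR lam ρ j c L R
  obtain ⟨-, -, hqc, hmisfits⟩ := mem_filter.1 hpq
  set p' := misfits mL mR lam i (c / 2 ^ (j - i)) (majorityLabel (ρ i) q) p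
  set q' := q.filter fun y => ρ i y = majorityLabel (ρ i) q
  have hq' : 1 / 2 * (#q : ℝ) ≤ #q' := by
    have hsplit : (#q' : ℝ) + #{y ∈ q | ρ i y ≠ majorityLabel (ρ i) q} = #q := by
      exact_mod_cast card_filter_add_card_filter_not _
    have hfew := hqc.card_ne_majorityLabel_lt.trans_le
      (mul_le_mul_of_nonneg_right hb (Nat.cast_nonneg _))
    linarith
  have hforced : γ / 4 / 4 * bmEdges G' p q ≤ bmEdges G' p' q' :=
    hreg.mul_bmEdges_le (filter_subset _ _) (filter_subset _ _) (by positivity) hδγ (by linarith)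
      hmisfits hq'
  have hadded : bmEdges G' p' q' ≤ bmEdges (G' \ G) p q := by
    refine bmEdges_le_bmEdges fun x hx y hy hG' => ?_
    obtain ⟨hxp, hxcol⟩ := mem_filter.1 hx
    obtain ⟨hyq, hylab⟩ := mem_filter.1 hy
    refine ⟨mem_sdiff.2 ⟨hG', fun hG => hxcol ?_⟩, hxp, hyq⟩
    obtain ⟨hxyLR, rfl⟩ := mem_filter.1 hG
    obtain ⟨hxL, hyR⟩ := mem_product.1 hxyLR
    rw [← hylab, ← hL.ancestor_eq i j hij hj x hxL, ← hR.ancestor_eq i j hij hj y hyR]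
    exact colour_ancestor hL.mono hR.mono hij hj _ _
  have hadded' : (bmEdges G' p' q' : ℝ) ≤ bmEdges (G' \ G) p q := by exact_mod_cast hadded
  have hlost : (bmEdges G p q : ℝ) ≤ bmEdges G' p q + bmEdges (G \ G') p q := by
    exact_mod_cast bmEdges_le_add_bmEdges_sdiff G G' p q
  have hscale := mul_le_mul_of_nonneg_left hlost (by positivity : 0 ≤ γ / 16)
  have hsmall : γ / 16 * (bmEdges (G \ G') p q : ℝ) ≤ bmEdges (G \ G') p q :=
    mul_le_of_le_one_left (Nat.cast_nonneg _) (by linarith)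
  linarith

lemma mul_sum_bmEdges_conflictPairs_le (hL : IsLabelling L mL s lam) (hR : IsLabelling R mR s ρ)
    (hij : i ≤ j) (hj : j ≤ s) (hγ : 0 < γ) (hγ1 : γ ≤ 1) (hb : b ≤ 1 / 2) (hδγ : δ ≤ γ / 4)
    (hP : IsPartition P L) (hQ : IsPartition Q R)
    (hreg : DeltaRegPartition δ (colourClass mL mR lam ρ j c L R) L R P Q) :
    γ / 16 * ∑ e ∈ conflictPairs mL mR lam ρ i (c / 2 ^ (j - i)) b γ P Q,
        (bmEdges (colourClass mL mR lam ρ j c L R) e.1 e.2 : ℝ) ≤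
      δ * #(colourClass mL mR lam ρ j c L R) := by
  obtain ⟨G', -, hchange, hreg⟩ := hreg
  set G := colourClass mL mR lam ρ j c L R
  set C := conflictPairs mL mR lam ρ i (c / 2 ^ (j - i)) b γ P Q
  calc γ / 16 * ∑ e ∈ C, (bmEdges G e.1 e.2 : ℝ)
      ≤ ∑ e ∈ C, ((bmEdges (G' \ G) e.1 e.2 : ℝ) + bmEdges (G \ G') e.1 e.2) := by
        rw [mul_sum]
        refine sum_le_sum fun e he => ?_
        obtain ⟨he₁, he₂⟩ := mem_product.1 (mem_filter.1 he).1
        exact mul_bmEdges_conflictPairs_le hL hR hij hj hγ hγ1 hb hδγ he (hreg _ he₁ _ he₂)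
    _ ≤ #(G' \ G) + #(G \ G') := by
        rw [sum_add_distrib]
        exact add_le_add (hP.sum_bmEdges_le hQ (filter_subset _ _) _)
          (hP.sum_bmEdges_le hQ (filter_subset _ _) _)
    _ ≤ δ * #G := hchange

theorem NearlyRefines.of_deltaRegPartition (hm : AdmissibleSizes mL mR s)
    (hL : IsLabelling L mL s lam) (hR : IsLabelling R mR s ρ) (hne : R.Nonempty) (hij : i ≤ j)
    (hj : j ≤ s) (hc : c < 2 ^ j) (hδγ : 128 * δ ≤ γ ^ 2) (hγ : 1 / 2 ^ 30 ≤ γ)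
    (hγ' : γ ≤ 1 / 2 ^ 9) (hP : IsPartition P L) (hQ : IsPartition Q R)
    (hreg : DeltaRegPartition δ (colourClass mL mR lam ρ j c L R) L R P Q)
    (hQR : NearlyRefines (1 / 2 ^ 9) (ρ i) Q R) : NearlyRefines γ (lam i) P L := by
  have hγ0 : 0 < γ := lt_of_lt_of_le (by positivity) hγ
  by_contra hlarge
  have hlower := card_mul_le_sum_bmEdges_conflictPairs hm hL hR hne hij hj hc hγ hP hQ hQR hlarge
  have hupper := mul_sum_bmEdges_conflictPairs_le hL hR hij hj hγ0 (by linarith)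
    (by norm_num : (1 / 2 ^ 9 : ℝ) ≤ 1 / 2) (by nlinarith) hP hQ hreg
  rw [card_colourClass hm hR hj hc] at hupper
  rw [NearlyRefines, not_le] at hlarge
  set X := ∑ p ∈ P with ¬ NearlyConstant γ (lam i) p, (#p : ℝ)
  set u := (#R / 2 ^ j : ℝ)
  have hu : 0 < u := div_pos (by exact_mod_cast hne.card_pos) (by positivity)
  have hscale := mul_le_mul_of_nonneg_left hlower (by positivity : 0 ≤ γ / 16)
  have hγX : γ * X ≤ 128 * δ * #L := le_of_mul_le_mul_right (by linarith) hu
  have hδL : 128 * δ * #L ≤ γ ^ 2 * #L := mul_le_mul_of_nonneg_right hδγ (Nat.cast_nonneg _)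
  nlinarith

end Refinement

section Labels

open Finset

variable {α : Type*} {S : Finset α} {P Q : Finset (Finset α)} {f : α → ℕ}

/-- The parts of `P` are the fibres of the label `f` on `S`. -/
def Labels (f : α → ℕ) (P : Finset (Finset α)) (S : Finset α) : Prop :=
  ∀ p ∈ P, ∀ x ∈ p, ∀ y ∈ S, f y = f x ↔ y ∈ p

lemma Labels.filter_eq (hf : Labels f P S) (hP : IsPartition P S) {p : Finset α} (hp : p ∈ P)
    {x : α} (hx : x ∈ p) : {y ∈ S | f y = f x} = p := by
  ext y
  rw [mem_filter]
  exact ⟨fun hy => (hf p hp x hx y hy.1).1 hy.2,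
    fun hy => ⟨hP.subset hp hy, (hf p hp x hx y (hP.subset hp hy)).2 hy⟩⟩

lemma Labels.exists_fibre_eq (hf : Labels f P S) (hP : IsPartition P S)
    (hlt : ∀ x ∈ S, f x < #P) {r : ℕ} (hr : r < #P) : ∃ p ∈ P, {x ∈ S | f x = r} = p := by
  have : Nonempty α := (card_pos.1 (Nat.zero_lt_of_lt hr)).elim fun p hp => (hP.nonempty hp).to_type
  choose! point hpoint using fun p (hp : p ∈ P) => hP.nonempty hp
  have hmaps : Set.MapsTo (fun p => f (point p)) P (range #P : Finset ℕ) := fun p hp =>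
    mem_coe.2 (mem_range.2 (hlt _ (hP.subset hp (hpoint p hp))))
  have hinj : Set.InjOn (fun p => f (point p)) (P : Set (Finset α)) := fun p hp p' hp' h =>
    hP.eq_of_mem hp hp' (hpoint p hp)
      ((hf p' hp' _ (hpoint p' hp') _ (hP.subset hp (hpoint p hp))).1 h)
  obtain ⟨p, hp, rfl⟩ := surjOn_of_injOn_of_card_le _ hmaps hinj (card_range _).le
    (mem_coe.2 (mem_range.2 hr))
  exact ⟨p, hp, hf.filter_eq hP hp (hpoint p hp)⟩

lemma IsPartition.sum_card (hP : IsPartition P S) : ∑ p ∈ P, #p = #S := by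
  have hunion : P.biUnion id = S := by
    refine (biUnion_subset.2 fun p hp => hP.subset hp).antisymm fun x hx => ?_
    obtain ⟨p, hp, hxp⟩ := hP.exists_mem hx
    exact mem_biUnion.2 ⟨p, hp, hxp⟩
  rw [← hunion, card_biUnion hP.pairwiseDisjoint]
  rfl

lemma IsPartition.card_mul_card (hP : IsPartition P S) (hequi : EquitableParts P) {p : Finset α}
    (hp : p ∈ P) : #P * #p = #S := by
  rw [← hP.sum_card, sum_const_nat fun q hq => hequi q hq p hp]

lemma IsPartition.filter_subset_of_refines (hQ : IsPartition Q S) (hP : IsPartition P S)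
    (href : Refines Q P) {p : Finset α} (hp : p ∈ P) : IsPartition {q ∈ Q | q ⊆ p} p := by
  refine ⟨fun q hq => hQ.nonempty (mem_filter.1 hq).1, fun q hq => (mem_filter.1 hq).2,
    fun x hx => ?_⟩
  obtain ⟨q, hq, hxq⟩ := hQ.exists_mem (hP.subset hp hx)
  obtain ⟨p', hp', hqp'⟩ := href q hq
  obtain rfl := hP.eq_of_mem hp hp' hx (hqp' hxq)
  exact ⟨q, ⟨mem_filter.2 ⟨hq, hqp'⟩, hxq⟩, fun q' ⟨hq', hxq'⟩ =>
    hQ.eq_of_mem (mem_filter.1 hq').1 hq hxq' hxq⟩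

lemma IsPartition.card_mul_card_filter_subset (hQ : IsPartition Q S) (hP : IsPartition P S)
    (hQequi : EquitableParts Q) (hPequi : EquitableParts P) (href : Refines Q P) {p : Finset α}
    (hp : p ∈ P) : #P * #{q ∈ Q | q ⊆ p} = #Q := by
  have hQp := hQ.filter_subset_of_refines hP href hp
  obtain ⟨x, hx⟩ := hP.nonempty hp
  obtain ⟨q, hq, -⟩ := hQp.exists_mem hx
  have hqQ := (mem_filter.1 hq).1
  have hpcard := hQp.card_mul_card
    (fun q hq q' hq' => hQequi q (mem_filter.1 hq).1 q' (mem_filter.1 hq').1) hq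
  refine Nat.eq_of_mul_eq_mul_right (hQ.nonempty hqQ).card_pos ?_
  rw [mul_assoc, hpcard, hP.card_mul_card hPequi hp, hQ.card_mul_card hQequi hqQ]

lemma IsPartition.exists_labels (hP : IsPartition P S) :
    ∃ f : α → ℕ, Labels f P S ∧ ∀ x ∈ S, f x < #P := by
  choose! part hpart hmem using fun x (hx : x ∈ S) => hP.exists_mem hx
  refine ⟨fun x => P.toList.idxOf (part x), fun p hp x hx y hy => ?_, fun x hx => ?_⟩
  · have hxS := hP.subset hp hx
    have hpx : part x = p := hP.eq_of_mem (hpart x hxS) hp (hmem x hxS) hx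
    rw [List.idxOf_inj (mem_toList.2 (hpart y hy)), hpx]
    exact ⟨fun h => h ▸ hmem y hy, fun h => hP.eq_of_mem (hpart y hy) hp (hmem y hy) h⟩
  · rw [← P.length_toList]
    exact List.idxOf_lt_length_iff.2 (mem_toList.2 (hpart x hx))

/- The label of the part of `Q` inside a part `p` of `P` is the label of `p`, followed by one base
`K` digit numbering the parts of `Q` inside `p`. -/
lemma Labels.exists_labels_of_refines (hf : Labels f P S) (hQ : IsPartition Q S)
    (hP : IsPartition P S) (href : Refines Q P) {K : ℕ} (hK : ∀ p ∈ P, #{q ∈ Q | q ⊆ p} = K) :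
    ∃ g : α → ℕ, Labels g Q S ∧ ∀ x ∈ S, g x / K = f x := by
  choose! part hpart hmem using fun x (hx : x ∈ S) => hP.exists_mem hx
  choose! digit hdigit hlt using fun p (hp : p ∈ P) =>
    (hQ.filter_subset_of_refines hP href hp).exists_labels
  have hdigit_lt : ∀ x ∈ S, digit (part x) x < K := fun x hx =>
    hK _ (hpart x hx) ▸ hlt _ (hpart x hx) x (hmem x hx)
  have hdiv : ∀ x ∈ S, (f x * K + digit (part x) x) / K = f x := fun x hx => by
    rw [mul_comm, Nat.mul_add_div (Nat.zero_lt_of_lt (hdigit_lt x hx)),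
      Nat.div_eq_of_lt (hdigit_lt x hx), add_zero]
  refine ⟨fun x => f x * K + digit (part x) x, fun q hq x hx y hy => ?_, hdiv⟩
  have hxS := hQ.subset hq hx
  obtain ⟨p, hp, hqp⟩ := href q hq
  obtain rfl := hP.eq_of_mem hp (hpart x hxS) (hqp hx) (hmem x hxS)
  have hdigit_iff : ∀ y ∈ part x, digit (part x) y = digit (part x) x ↔ y ∈ q := fun y hy =>
    hdigit _ hp q (mem_filter.2 ⟨hq, hqp⟩) x hx y hy
  have hpart_eq : ∀ y ∈ part x, part y = part x := fun y hy =>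
    hP.eq_of_mem (hpart y (hP.subset hp hy)) hp (hmem y (hP.subset hp hy)) hy
  have hf_iff := hf _ hp x (hqp hx) y hy
  refine ⟨fun h => ?_, fun hyq => ?_⟩
  · have hfy : f y = f x := (hdiv y hy).symm.trans ((congrArg (· / K) h).trans (hdiv x hxS))
    simp only [hfy, hpart_eq y (hf_iff.1 hfy), Nat.add_left_cancel_iff] at h
    exact (hdigit_iff y (hf_iff.1 hfy)).1 h
  · simp only [hf_iff.2 (hqp hyq), hpart_eq y (hqp hyq), (hdigit_iff y (hqp hyq)).2 hyq]

lemma Labels.nearlyConstant_iff [DecidableEq α] (hf : Labels f P S) (hP : IsPartition P S) {b : ℝ}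
    (hb : b ≤ 1) {q : Finset α} (hq : q ⊆ S) : NearlyConstant b f q ↔ ApproxMem b q P := by
  have hsdiff : ∀ p ∈ P, ∀ x ∈ p, {y ∈ q | f y ≠ f x} = q \ p := fun p hp x hx => by
    ext y
    rw [mem_filter, mem_sdiff]
    exact and_congr_right fun hy => not_congr (hf p hp x hx y (hq hy))
  refine ⟨fun ⟨r, hr⟩ => ?_, fun ⟨p, hp, hqp⟩ => ?_⟩
  · obtain ⟨x, hx, rfl⟩ : ∃ x ∈ q, f x = r := by
      by_contra! hne
      rw [filter_true_of_mem hne] at hr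
      exact hr.not_ge (mul_le_of_le_one_left (Nat.cast_nonneg _) hb)
    obtain ⟨p, hp, hxp⟩ := hP.exists_mem (hq hx)
    refine ⟨p, hp, ?_⟩
    rwa [hsdiff p hp x hxp] at hr
  · obtain ⟨x, hx⟩ := hP.nonempty hp
    refine ⟨f x, ?_⟩
    rwa [hsdiff p hp x hx]

lemma Labels.nearlyRefines_iff [DecidableEq α] (hf : Labels f P S) (hP : IsPartition P S)
    (hQ : IsPartition Q S) {b : ℝ} (hb : b ≤ 1) :
    NearlyRefines b f Q S ↔ ApproxRefines b Q P S := by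
  rw [NearlyRefines, ApproxRefines, filter_congr fun q hq =>
    not_congr (hf.nearlyConstant_iff hP hb (hQ.subset hq))]

lemma IsLabelling.update_succ {m : ℕ → ℕ} {s : ℕ} {f : ℕ → α → ℕ} (hf : IsLabelling S m s f)
    (hms : m s ≤ m (s + 1)) {g : α → ℕ} (hlt : ∀ x ∈ S, g x < 2 ^ m (s + 1))
    (hcard : ∀ r < 2 ^ m (s + 1), #{x ∈ S | g x = r} * 2 ^ m (s + 1) = #S)
    (hg : ∀ x ∈ S, ancestor m s (s + 1) (g x) = f s x) :
    IsLabelling S m (s + 1) (Function.update f (s + 1) g) := by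
  have hlast : Function.update f (s + 1) g (s + 1) = g := Function.update_self ..
  have hold : ∀ i ≤ s, Function.update f (s + 1) g i = f i := fun i hi =>
    Function.update_of_ne (by omega) ..
  refine ⟨fun i j hij hj => ?_, fun i hi => ?_, fun i hi => ?_, fun i j hij hj x hx => ?_⟩
  · rcases hj.eq_or_lt with rfl | hj
    · rcases hij.eq_or_lt with rfl | hij
      · rfl
      · exact (hf.mono i s (by omega) le_rfl).trans hms
    · exact hf.mono i j hij (by omega)
  · rcases hi.eq_or_lt with rfl | hi
    · rwa [hlast]
    · rw [hold i (by omega)]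
      exact hf.lt i (by omega)
  · rcases hi.eq_or_lt with rfl | hi
    · rwa [hlast]
    · rw [hold i (by omega)]
      exact hf.card_fibre i (by omega)
  · rcases hij.eq_or_lt with rfl | hij
    · exact ancestor_self ..
    rw [hold i (by omega)]
    rcases hj.eq_or_lt with rfl | hj
    · rw [hlast, ← ancestor_ancestor (hf.mono i s (by omega) le_rfl) hms, hg x hx]
      exact hf.ancestor_eq i s (by omega) le_rfl x hx
    · rw [hold j (by omega)]
      exact hf.ancestor_eq i j hij.le (by omega) x hx

lemma Labels.card_fibre_mul_card (hf : Labels f P S) (hP : IsPartition P S)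
    (hequi : EquitableParts P) (hlt : ∀ x ∈ S, f x < #P) {r : ℕ} (hr : r < #P) :
    #{x ∈ S | f x = r} * #P = #S := by
  obtain ⟨p, hp, hrp⟩ := hf.exists_fibre_eq hP hlt hr
  rw [hrp, mul_comm, hP.card_mul_card hequi hp]

lemma Labels.exists_labels_lt_two_pow (hf : Labels f P S) (hP : IsPartition P S)
    (hQ : IsPartition Q S) (hPequi : EquitableParts P) (hQequi : EquitableParts Q)
    (href : Refines Q P) {a b : ℕ} (hab : a ≤ b) (hPcard : #P = 2 ^ a) (hQcard : #Q = 2 ^ b)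
    (hlt : ∀ x ∈ S, f x < 2 ^ a) :
    ∃ g : α → ℕ, Labels g Q S ∧ (∀ x ∈ S, g x < 2 ^ b) ∧ ∀ x ∈ S, g x / 2 ^ (b - a) = f x := by
  have hpow : 2 ^ b = 2 ^ a * 2 ^ (b - a) := by rw [← pow_add, Nat.add_sub_cancel' hab]
  have hchildren : ∀ p ∈ P, #{q ∈ Q | q ⊆ p} = 2 ^ (b - a) := fun p hp => by
    have hmul := hQ.card_mul_card_filter_subset hP hQequi hPequi href hp
    rw [hPcard, hQcard, hpow] at hmul
    exact Nat.eq_of_mul_eq_mul_left (Nat.two_pow_pos a) hmul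
  obtain ⟨g, hg, hdiv⟩ := hf.exists_labels_of_refines hQ hP href hchildren
  refine ⟨g, hg, fun x hx => ?_, hdiv⟩
  have hdiv_lt := hlt x hx
  rwa [← hdiv x hx, Nat.div_lt_iff_lt_mul (by positivity), ← hpow] at hdiv_lt

lemma exists_isLabelling {P : ℕ → Finset (Finset α)} {m : ℕ → ℕ} (s : ℕ)
    (hmono : ∀ i < s, m i ≤ m (i + 1)) (hpart : ∀ i ≤ s, IsPartition (P i) S)
    (hequi : ∀ i ≤ s, EquitableParts (P i)) (hcard : ∀ i ≤ s, #(P i) = 2 ^ m i)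
    (href : ∀ i < s, Refines (P (i + 1)) (P i)) :
    ∃ f, IsLabelling S m s f ∧ ∀ i ≤ s, Labels (f i) (P i) S := by
  induction s with
  | zero =>
    obtain ⟨f, hf, hlt⟩ := (hpart 0 le_rfl).exists_labels
    refine ⟨fun _ => f, ⟨fun i j hij hj => ?_, fun i hi => ?_, fun i hi r hr => ?_, ?_⟩, ?_⟩
    · rw [show i = j by omega]
    · rwa [Nat.le_zero.1 hi, ← hcard 0 le_rfl]
    · rw [Nat.le_zero.1 hi, ← hcard 0 le_rfl] at hr ⊢
      exact hf.card_fibre_mul_card (hpart 0 le_rfl) (hequi 0 le_rfl) hlt hr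
    · intro i j hij hj x _
      rw [show i = j by omega, ancestor_self]
    · intro i hi
      rwa [Nat.le_zero.1 hi]
  | succ s ih =>
    obtain ⟨f, hf, hlab⟩ := ih (fun i hi => hmono i (by omega)) (fun i hi => hpart i (by omega))
      (fun i hi => hequi i (by omega)) (fun i hi => hcard i (by omega))
      (fun i hi => href i (by omega))
    have hms := hmono s (by omega)
    obtain ⟨g, hg, hlt, hdiv⟩ := (hlab s le_rfl).exists_labels_lt_two_pow (hpart s (by omega))
      (hpart _ le_rfl) (hequi s (by omega)) (hequi _ le_rfl) (href s (by omega)) hms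
      (hcard s (by omega)) (hcard _ le_rfl) (hf.lt s le_rfl)
    refine ⟨_, hf.update_succ hms hlt (fun r hr => ?_) hdiv, fun i hi => ?_⟩
    · rw [← hcard _ le_rfl] at hlt hr ⊢
      exact hg.card_fibre_mul_card (hpart _ le_rfl) (hequi _ le_rfl) hlt hr
    · rcases hi.eq_or_lt with rfl | hi
      · rwa [Function.update_self]
      · rw [Function.update_of_ne (by omega)]
        exact hlab i (by omega)

end Labels

section TowerArithmetic

/-- The binary logarithm of `t(i)`, with the value `0` at `i = 0`, the level of the trivial
partition. -/
noncomputable def logTfn : ℕ → ℕ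
  | 0 => 0
  | 1 => 250
  | n + 2 => tfn (n + 1) / efn (n + 1)

lemma tfn_eq_two_pow_logTfn : ∀ {i : ℕ}, 1 ≤ i → tfn i = 2 ^ logTfn i
  | 1, _ => by rw [tfn, logTfn]
  | n + 2, _ => by rw [tfn, logTfn]

lemma two_pow_div_efn {a j : ℕ} (h : j + 10 ≤ a) : 2 ^ a / efn j = 2 ^ (a - (j + 10)) := by
  rw [efn, Nat.pow_div h two_pos]

lemma four_mul_le_two_pow_add_four (k : ℕ) : 4 * k ≤ 2 ^ k + 4 := by
  induction k with
  | zero => norm_num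
  | succ k ih =>
    rcases Nat.lt_or_ge k 2 with h | h
    · interval_cases k <;> norm_num
    · have : 2 ^ 2 ≤ 2 ^ k := Nat.pow_le_pow_right two_pos h
      rw [pow_succ]
      omega

lemma logTfn_succ {i : ℕ} (hi : 1 ≤ i) : logTfn (i + 1) = 2 ^ logTfn i / efn i := by
  rw [← tfn_eq_two_pow_logTfn hi]
  obtain ⟨n, rfl⟩ := Nat.exists_eq_add_of_le' hi
  rw [logTfn]

lemma le_logTfn {i : ℕ} (hi : 1 ≤ i) : 246 + 4 * i ≤ logTfn i := by
  induction i, hi using Nat.le_induction with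
  | base => rw [logTfn]
  | succ i hi ih =>
    have := four_mul_le_two_pow_add_four (logTfn i - (i + 10))
    rw [logTfn_succ hi, two_pow_div_efn (by omega)]
    omega

lemma logTfn_succ_mul {i : ℕ} (hi : 1 ≤ i) : logTfn (i + 1) * 2 ^ (i + 10) = 2 ^ logTfn i := by
  have := le_logTfn hi
  rw [logTfn_succ hi, two_pow_div_efn (by omega), ← pow_add, Nat.sub_add_cancel (by omega)]

lemma logTfn_add_two_le_succ (i : ℕ) : logTfn i + 2 ≤ logTfn (i + 1) := by
  rcases i.eq_zero_or_pos with rfl | hi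
  · rw [logTfn, logTfn]
    norm_num
  · have := le_logTfn hi
    have := four_mul_le_two_pow_add_four (logTfn i - (i + 10))
    rw [logTfn_succ hi, two_pow_div_efn (by omega)]
    omega

lemma logTfn_add_two_le {i k : ℕ} (h : i < k) : logTfn i + 2 ≤ logTfn k := by
  induction k, h using Nat.le_induction with
  | base => exact logTfn_add_two_le_succ i
  | succ k _ ih => have := logTfn_add_two_le_succ k; omega

lemma wfn_succ {j : ℕ} (hj : 1 ≤ j) : wfn (j + 1) = wstar j := by
  obtain ⟨n, rfl⟩ := Nat.exists_eq_add_of_le' hj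
  rw [wfn, wstar]

lemma wstar_zero : wstar 0 = 0 := by rw [wstar, wfn, tfn, Nat.zero_div]

lemma wstar_eq_two_pow {j : ℕ} (hj : 1 ≤ j) (hjw : j ≤ wfn j) :
    wstar j = 2 ^ (logTfn (wfn j) - (j + 10)) := by
  have := le_logTfn (hj.trans hjw)
  rw [wstar, tfn_eq_two_pow_logTfn (hj.trans hjw), two_pow_div_efn (by omega)]

lemma wfn_lt_wstar_of_le {j : ℕ} (hj : 1 ≤ j) (hjw : j ≤ wfn j) : wfn j < wstar j := by
  have := le_logTfn (hj.trans hjw)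
  have := four_mul_le_two_pow_add_four (logTfn (wfn j) - (j + 10))
  rw [wstar_eq_two_pow hj hjw]
  omega

lemma le_wfn {j : ℕ} (hj : 1 ≤ j) : j ≤ wfn j := by
  induction j, hj using Nat.le_induction with
  | base => rw [wfn]
  | succ j hj ih =>
    rw [wfn_succ hj]
    exact ih.trans_lt (wfn_lt_wstar_of_le hj ih)

lemma wfn_lt_wstar {j : ℕ} (hj : 1 ≤ j) : wfn j < wstar j := wfn_lt_wstar_of_le hj (le_wfn hj)

lemma wstar_mul {j : ℕ} (hj : 1 ≤ j) : wstar j * 2 ^ (j + 10) = 2 ^ logTfn (wfn j) := by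
  have := le_wfn hj
  have := le_logTfn (hj.trans (le_wfn hj))
  rw [wstar_eq_two_pow hj (le_wfn hj), ← pow_add, Nat.sub_add_cancel (by omega)]

lemma wfn_lt_wfn_succ (j : ℕ) : wfn j < wfn (j + 1) := by
  rcases j.eq_zero_or_pos with rfl | hj
  · rw [wfn, wfn]
    norm_num
  · rw [wfn_succ hj]
    exact wfn_lt_wstar hj

lemma wfn_monotone : Monotone wfn := monotone_nat_of_le_succ fun j => (wfn_lt_wfn_succ j).le

lemma wstar_monotone : Monotone wstar := monotone_nat_of_le_succ fun j => by
  rcases j.eq_zero_or_pos with rfl | hj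
  · rw [wstar_zero]
    exact Nat.zero_le _
  · rw [← wfn_succ hj]
    exact (wfn_lt_wstar (by omega)).le

lemma wfn_le_wstar (j : ℕ) : wfn j ≤ wstar j := by
  rcases j.eq_zero_or_pos with rfl | hj
  · rw [wfn, wstar_zero]
  · exact (wfn_lt_wstar hj).le

lemma exists_wfn_le_le_wstar {s i : ℕ} (hi : i ≤ wfn s) : ∃ j ≤ s, wfn j ≤ i ∧ i ≤ wstar j := by
  induction s with
  | zero => exact ⟨0, le_rfl, by rw [wfn]; exact i.zero_le, hi.trans (wfn_le_wstar 0)⟩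
  | succ s ih =>
    rcases le_or_gt i (wfn s) with hle | hlt
    · obtain ⟨j, hjs, hij⟩ := ih hle
      exact ⟨j, Nat.le_succ_of_le hjs, hij⟩
    rcases s.eq_zero_or_pos with rfl | hs
    · exact ⟨1, le_rfl, by simp only [wfn] at hlt ⊢; omega, hi.trans (wfn_le_wstar 1)⟩
    · exact ⟨s, s.le_succ, hlt.le, wfn_succ hs ▸ hi⟩

/-- The level of `V_1` paired with the level `i` of `V_2`: one step finer, with the trivial
partition at level `0`. -/
def shiftedLevel (i : ℕ) : ℕ := if i = 0 then 0 else i + 1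

lemma shiftedLevel_of_pos {i : ℕ} (hi : 1 ≤ i) : shiftedLevel i = i + 1 := if_neg (by omega)

lemma shiftedLevel_le (i : ℕ) : shiftedLevel i ≤ i + 1 := by
  rw [shiftedLevel]
  split_ifs <;> omega

lemma shiftedLevel_monotone : Monotone shiftedLevel := fun i j hij => by
  simp only [shiftedLevel]
  split_ifs <;> omega

lemma admissibleSizes_logTfn (s : ℕ) :
    AdmissibleSizes (fun i => logTfn (shiftedLevel i)) logTfn s where
  left_zero := by rw [shiftedLevel, if_pos rfl, logTfn]
  right_zero := by rw [logTfn]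
  left_mul i hi _ := by rw [shiftedLevel_of_pos hi, logTfn_succ_mul hi]
  le_right _ hi _ := le_logTfn hi
  right_add_two_le i _ := logTfn_add_two_le_succ i

lemma admissibleSizes_wstar (s : ℕ) : AdmissibleSizes wstar (fun j => logTfn (wfn j)) s where
  left_zero := wstar_zero
  right_zero := by rw [wfn, logTfn]
  left_mul _ hi _ := wstar_mul hi
  le_right i hi _ := by
    have := le_wfn hi
    have := le_logTfn (hi.trans (le_wfn hi))
    omega
  right_add_two_le i _ := logTfn_add_two_le (wfn_lt_wfn_succ i)

end TowerArithmetic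

section Unions

open Finset

variable {α β : Type*}

lemma bmDens_biUnion {F : Finset (Finset (α × β))}
    (hF : (F : Set (Finset (α × β))).PairwiseDisjoint id) (A : Finset α) (B : Finset β) :
    bmDens (F.biUnion id) A B = ∑ g ∈ F, bmDens g A B := by
  simp only [bmDens, bmEdges]
  rw [← sum_div, filter_biUnion, card_biUnion, Nat.cast_sum]
  · rfl
  · exact hF.mono fun _ => filter_subset _ _

lemma deltaReg_biUnion {F : Finset (Finset (α × β))}
    (hF : (F : Set (Finset (α × β))).PairwiseDisjoint id) {A : Finset α} {B : Finset β} {δ δ' : ℝ}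
    (hδ : δ ≤ δ') (hreg : ∀ g ∈ F, DeltaReg δ g A B) : DeltaReg δ' (F.biUnion id) A B := by
  intro A' hA B' hB hA' hB'
  rw [bmDens_biUnion hF, bmDens_biUnion hF, mul_sum]
  exact sum_le_sum fun g hg => hreg g hg A' hA B' hB
    ((by gcongr : δ * (#A : ℝ) ≤ δ' * #A).trans hA')
    ((by gcongr : δ * (#B : ℝ) ≤ δ' * #B).trans hB')

lemma sum_card_le_of_pairwise_disjoint {U : ℕ → Finset α} {B : Finset α}
    (hU : Pairwise (Function.onFun Disjoint U)) (hUB : ∀ c, U c ⊆ B) (N : ℕ) :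
    ∑ c ∈ range N, #(U c) ≤ #B := by
  rw [← card_biUnion fun c _ c' _ hne => hU hne]
  exact card_le_card (biUnion_subset.2 fun c _ => hUB c)

lemma sum_card_fibres {S : Finset α} {f : α → ℕ} {N : ℕ} (hf : ∀ x ∈ S, f x < N) :
    ∑ c ∈ range N, #{x ∈ S | f x = c} = #S :=
  (card_eq_sum_card_fiberwise fun x hx => mem_coe.2 (mem_range.2 (hf x hx))).symm

/-- The parts of `P` on which `f` is nearly constant with majority label `c`. -/
noncomputable def majorityParts (b : ℝ) (f : α → ℕ) (P : Finset (Finset α)) (c : ℕ) :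
    Finset (Finset α) :=
  {p ∈ P | NearlyConstant b f p ∧ majorityLabel f p = c}

variable {S : Finset α} {P : Finset (Finset α)} {f : α → ℕ} {b : ℝ}

lemma IsPartition.disjoint_biUnion_majorityParts [DecidableEq α] (hP : IsPartition P S) {c c' : ℕ}
    (hne : c ≠ c') :
    Disjoint ((majorityParts b f P c).biUnion id) ((majorityParts b f P c').biUnion id) := by
  simp only [disjoint_left, mem_biUnion, id]
  rintro x ⟨p, hp, hxp⟩ ⟨p', hp', hxp'⟩
  obtain ⟨hpP, -, rfl⟩ := mem_filter.1 hp
  obtain ⟨hpP', -, rfl⟩ := mem_filter.1 hp'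
  exact hne (by rw [hP.eq_of_mem hpP hpP' hxp hxp'])

lemma IsPartition.biUnion_majorityParts_sdiff_subset [DecidableEq α] (hP : IsPartition P S)
    (c : ℕ) :
    (majorityParts b f P c).biUnion id \ {x ∈ S | f x = c} ⊆ atypicalPoints b f P S := by
  intro x hx
  rw [mem_sdiff, mem_biUnion] at hx
  obtain ⟨⟨p, hp, hxp⟩, hxc⟩ := hx
  obtain ⟨hpP, -, rfl⟩ := mem_filter.1 hp
  have hxS := hP.subset hpP hxp
  refine mem_atypicalPoints.2 ⟨hxS, fun ⟨q, hq, _, hxq, hfx⟩ => hxc (mem_filter.2 ⟨hxS, ?_⟩)⟩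
  rw [hfx, hP.eq_of_mem hq hpP hxq hxp]

lemma fibre_sdiff_biUnion_majorityParts_subset [DecidableEq α] (c : ℕ) :
    {x ∈ S | f x = c} \ (majorityParts b f P c).biUnion id ⊆ atypicalPoints b f P S := by
  intro x hx
  rw [mem_sdiff, mem_filter, mem_biUnion] at hx
  obtain ⟨⟨hxS, hfx⟩, hxp⟩ := hx
  exact mem_atypicalPoints.2 ⟨hxS, fun ⟨p, hp, hpc, hxp', hmaj⟩ =>
    hxp ⟨p, mem_filter.2 ⟨hp, hpc, hmaj.symm.trans hfx⟩, hxp'⟩⟩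

/- Both differences consist of atypical points, which are few; some fibre has at most its fair share
of them. -/
lemma NearlyRefines.exists_card_sdiff_add_card_sdiff_le [DecidableEq α] (hP : IsPartition P S)
    (hb : 0 ≤ b) (h : NearlyRefines b f P S) {N : ℕ} (hN : 0 < N) (hf : ∀ x ∈ S, f x < N) :
    ∃ c < N, (#((majorityParts b f P c).biUnion id \ {x ∈ S | f x = c}) : ℝ) +
        #({x ∈ S | f x = c} \ (majorityParts b f P c).biUnion id) ≤
      4 * b * #{x ∈ S | f x = c} := by
  set U := fun c => (majorityParts b f P c).biUnion id
  set D := fun c => S.filter fun x => f x = c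
  have hU : ∑ c ∈ range N, #(U c \ D c) ≤ #(atypicalPoints b f P S) :=
    sum_card_le_of_pairwise_disjoint
      (fun c c' hne => (hP.disjoint_biUnion_majorityParts hne).mono sdiff_subset sdiff_subset)
      hP.biUnion_majorityParts_sdiff_subset N
  have hD : ∑ c ∈ range N, #(D c \ U c) ≤ #(atypicalPoints b f P S) :=
    sum_card_le_of_pairwise_disjoint
      (fun c c' hne => (disjoint_filter.2 fun x _ hc hc' => hne (hc.symm.trans hc')).mono
        sdiff_subset sdiff_subset)
      fibre_sdiff_biUnion_majorityParts_subset N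
  obtain ⟨c, hc, hle⟩ := exists_le_of_sum_le (nonempty_range_iff.2 hN.ne')
    (f := fun c => (#(U c \ D c) : ℝ) + #(D c \ U c)) (g := fun c => 4 * b * #(D c)) (by
      calc ∑ c ∈ range N, ((#(U c \ D c) : ℝ) + #(D c \ U c))
          ≤ #(atypicalPoints b f P S) + #(atypicalPoints b f P S) := by
            rw [sum_add_distrib]
            exact_mod_cast add_le_add hU hD
        _ ≤ 4 * b * #S := by linarith [card_atypicalPoints_le hP hb h]
        _ = ∑ c ∈ range N, 4 * b * #(D c) := by
            rw [← mul_sum, ← Nat.cast_sum, sum_card_fibres hf])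
  exact ⟨c, mem_range.1 hc, hle⟩

lemma NearlyRefines.exists_deltaRegPartition_fibre [DecidableEq α] [DecidableEq β] {A : Finset α}
    {B : Finset β} {𝒢 : Finset (Finset (α × β))} {C : α × β → ℕ} (h𝒢 : IsPartition 𝒢 (A ×ˢ B))
    (hb : 0 ≤ b) (h : NearlyRefines b C 𝒢 (A ×ˢ B)) {N : ℕ} (hN : 0 < N)
    (hC : ∀ e ∈ A ×ˢ B, C e < N) {δ : ℝ} (hδ : δ ≤ 4 * b) {P : Finset (Finset α)}
    {Q : Finset (Finset β)} (hreg : ∀ g ∈ 𝒢, ∀ p ∈ P, ∀ q ∈ Q, DeltaReg δ g p q) :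
    ∃ c < N, DeltaRegPartition (4 * b) {e ∈ A ×ˢ B | C e = c} A B P Q := by
  obtain ⟨c, hc, hle⟩ := h.exists_card_sdiff_add_card_sdiff_le h𝒢 hb hN hC
  have hsub : majorityParts b C 𝒢 c ⊆ 𝒢 := filter_subset _ _
  refine ⟨c, hc, (majorityParts b C 𝒢 c).biUnion id,
    biUnion_subset.2 fun g hg => h𝒢.subset (hsub hg), by convert hle, fun p hp q hq => ?_⟩
  convert deltaReg_biUnion (h𝒢.pairwiseDisjoint.subset hsub) hδ
    fun g hg => hreg g (hsub hg) p hp q hq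

end Unions

section PairColour

open Finset

/-- The colouring of level `φ j` of the pairs in `L × R`, viewed as a label of level `j` of the
pairs. -/
noncomputable def pairColour {α β : Type*} (mL mR φ : ℕ → ℕ) (lam : ℕ → α → ℕ) (ρ : ℕ → β → ℕ)
    (j : ℕ) (e : α × β) : ℕ :=
  colour mL mR (φ j) (lam (φ j) e.1) (ρ (φ j) e.2)

variable {α β γ : Type*} {mL mR : ℕ → ℕ} {s t : ℕ} {L : Finset α} {R : Finset β} {W : Finset γ}
  {lam : ℕ → α → ℕ} {ρ : ℕ → β → ℕ}

lemma IsLabelling.comp (hL : IsLabelling L mL t lam) {φ : ℕ → ℕ} (hφ : Monotone φ)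
    (hs : φ s ≤ t) : IsLabelling L (fun i => mL (φ i)) s fun i => lam (φ i) where
  mono _ _ hij hj := hL.mono _ _ (hφ hij) ((hφ hj).trans hs)
  lt _ hi := hL.lt _ ((hφ hi).trans hs)
  card_fibre _ hi := hL.card_fibre _ ((hφ hi).trans hs)
  ancestor_eq _ _ hij hj := hL.ancestor_eq _ _ (hφ hij) ((hφ hj).trans hs)

lemma NearlyRefines.of_level_le (hL : IsLabelling L mL s lam) {i j : ℕ} (hij : i ≤ j) (hj : j ≤ s)
    {P : Finset (Finset α)} (hP : IsPartition P L) {b : ℝ} (h : NearlyRefines b (lam j) P L) :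
    NearlyRefines b (lam i) P L := by
  have hcoarse : ∀ p ∈ P, NearlyConstant b (lam j) p → NearlyConstant b (lam i) p := by
    rintro p hp ⟨r, hr⟩
    refine ⟨ancestor mL i j r, lt_of_le_of_lt ?_ hr⟩
    rw [Nat.cast_le]
    refine card_le_card (monotone_filter_right p fun x hx hne heq => hne ?_)
    rw [← hL.ancestor_eq i j hij hj x (hP.subset hp hx), heq]
  refine le_trans (sum_le_sum_of_subset_of_nonneg (fun p hp => ?_) fun _ _ _ => by positivity) h
  rw [mem_filter] at hp ⊢
  exact ⟨hp.1, fun hc => hp.2 (hcoarse p hp.1 hc)⟩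

lemma isLabelling_pairColour (hm : AdmissibleSizes mL mR t) (hL : IsLabelling L mL t lam)
    (hR : IsLabelling R mR t ρ) {φ : ℕ → ℕ} (hφ : Monotone φ) (hs : φ s ≤ t) :
    IsLabelling (L ×ˢ R) φ s (pairColour mL mR φ lam ρ) where
  mono _ _ hij _ := hφ hij
  lt _ _ _ _ := colour_lt ..
  card_fibre j hj c hc := by
    have hcard := card_colourClass (lam := lam) (L := L) hm hR ((hφ hj).trans hs) hc
    rw [← mul_div_assoc, eq_div_iff (by positivity)] at hcard
    rw [card_product]
    exact_mod_cast hcard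
  ancestor_eq i j hij hj e he := by
    obtain ⟨heL, heR⟩ := mem_product.1 he
    have hjt := (hφ hj).trans hs
    simp only [pairColour]
    rw [← hL.ancestor_eq _ _ (hφ hij) hjt e.1 heL, ← hR.ancestor_eq _ _ (hφ hij) hjt e.2 heR,
      colour_ancestor hL.mono hR.mono (hφ hij) hjt, ancestor]

variable [DecidableEq α] [DecidableEq β] [DecidableEq γ]

/- A regular partition of the colouring of `(L × R, W)` makes `𝒢` nearly refine the colour classes
of `(L, R)`. Then one of these classes is nearly a union of regular graphs, so that `P ∪ Q` is a
regular partition of it. -/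
theorem NearlyRefines.of_deltaRegPartition_pairColour (hm : AdmissibleSizes mL mR t)
    (hL : IsLabelling L mL t lam) (hR : IsLabelling R mR t ρ) (hRne : R.Nonempty)
    {φ mW : ℕ → ℕ} (hφ : Monotone φ) (hs : φ s ≤ t) (hmW : AdmissibleSizes φ mW s)
    {τ : ℕ → γ → ℕ} (hW : IsLabelling W mW s τ) (hWne : W.Nonempty) {P : Finset (Finset α)}
    {Q : Finset (Finset β)} {X : Finset (Finset γ)} {𝒢 : Finset (Finset (α × β))}
    (hP : IsPartition P L) (hQ : IsPartition Q R) (hX : IsPartition X W)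
    (h𝒢 : IsPartition 𝒢 (L ×ˢ R))
    (hgood : ∀ g ∈ 𝒢, ∀ p ∈ P, ∀ q ∈ Q, DeltaReg (1 / 2 ^ 70) g p q) {c : ℕ} (hc : c < 2 ^ s)
    (hreg : DeltaRegPartition (1 / 2 ^ 70)
      (colourClass φ mW (pairColour mL mR φ lam ρ) τ s c (L ×ˢ R) W) (L ×ˢ R) W 𝒢 X)
    {i j : ℕ} (hj : j ≤ s) (hij : i ≤ φ j) (hXW : NearlyRefines (1 / 2 ^ 9) (τ j) X W)
    (hQR : NearlyRefines (1 / 2 ^ 9) (ρ i) Q R) : NearlyRefines (1 / 2 ^ 9) (lam i) P L := by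
  have hpair := isLabelling_pairColour hm hL hR hφ hs
  have h𝒢ref : NearlyRefines (1 / 2 ^ 30) (pairColour mL mR φ lam ρ j) 𝒢 (L ×ˢ R) :=
    .of_deltaRegPartition hmW hpair hW hWne hj le_rfl hc (by norm_num) le_rfl (by norm_num) h𝒢 hX
      hreg hXW
  obtain ⟨d, hd, hdreg⟩ := h𝒢ref.exists_deltaRegPartition_fibre h𝒢 (by positivity)
    (Nat.two_pow_pos _) (hpair.lt j hj) (by norm_num) hgood
  exact .of_deltaRegPartition hm hL hR hRne hij ((hφ hj).trans hs) hd (by norm_num) (by norm_num)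
    le_rfl hP hQ hdreg hQR

end PairColour

section Restriction

open Finset

variable {α : Type*} {S V V₁ V₂ V₃ : Finset α} {P Q 𝒱 : Finset (Finset α)}

lemma isPartition_singleton (hS : S.Nonempty) : IsPartition {S} S := by
  refine ⟨by simpa using hS, by simp, fun x hx => ⟨S, ⟨mem_singleton_self S, hx⟩, ?_⟩⟩
  exact fun p hp => mem_singleton.1 hp.1

lemma exists_isLabelling_logTfn (hS : S.Nonempty) {P : ℕ → Finset (Finset α)} {M : ℕ}
    (hpart : ∀ i, 1 ≤ i → i ≤ M → IsPartition (P i) S)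
    (hequi : ∀ i, 1 ≤ i → i ≤ M → EquitableParts (P i))
    (href : ∀ i, 1 ≤ i → i < M → Refines (P (i + 1)) (P i))
    (hcard : ∀ i, 1 ≤ i → i ≤ M → #(P i) = tfn i) :
    ∃ f, IsLabelling S logTfn M f ∧ ∀ i, 1 ≤ i → i ≤ M → Labels (f i) (P i) S := by
  have hupdate : ∀ i, 1 ≤ i → Function.update P 0 {S} i = P i := fun i hi =>
    Function.update_of_ne (by omega) _ _
  have hlevels : ∀ i ≤ M, IsPartition (Function.update P 0 {S} i) S ∧
      EquitableParts (Function.update P 0 {S} i) ∧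
      #(Function.update P 0 {S} i) = 2 ^ logTfn i := by
    intro i hi
    rcases i.eq_zero_or_pos with rfl | hpos
    · simpa [EquitableParts, logTfn] using isPartition_singleton hS
    · rw [hupdate i hpos, ← tfn_eq_two_pow_logTfn hpos]
      exact ⟨hpart i hpos hi, hequi i hpos hi, hcard i hpos hi⟩
  have hrefines : ∀ i < M,
      Refines (Function.update P 0 {S} (i + 1)) (Function.update P 0 {S} i) := by
    intro i hi
    rw [hupdate _ le_add_self]
    rcases i.eq_zero_or_pos with rfl | hpos
    · rw [Function.update_self]
      exact fun p hp => ⟨S, mem_singleton_self S, (hpart _ le_add_self hi).subset hp⟩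
    · rw [hupdate i hpos]
      exact href i hpos hi
  obtain ⟨f, hf, hlabels⟩ := exists_isLabelling M
    (fun i _ => (Nat.le_add_right _ 2).trans (logTfn_add_two_le_succ i))
    (fun i hi => (hlevels i hi).1) (fun i hi => (hlevels i hi).2.1)
    (fun i hi => (hlevels i hi).2.2) hrefines
  exact ⟨f, hf, fun i hi hiM => hupdate i hi ▸ hlabels i hiM⟩

variable [DecidableEq α]

lemma isPartition_triple (h₁₂ : Disjoint V₁ V₂) (h₁₃ : Disjoint V₁ V₃) (h₂₃ : Disjoint V₂ V₃)
    (h₁ : V₁.Nonempty) (h₂ : V₂.Nonempty) (h₃ : V₃.Nonempty) :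
    IsPartition {V₁, V₂, V₃} (V₁ ∪ V₂ ∪ V₃) := by
  rw [disjoint_left] at h₁₂ h₁₃ h₂₃
  simp only [IsPartition, ExistsUnique, mem_insert, mem_singleton, mem_union, forall_eq_or_imp,
    forall_eq, subset_iff]
  refine ⟨⟨h₁, h₂, h₃⟩, by tauto, ?_⟩
  rintro x ((hx | hx) | hx)
  · exact ⟨V₁, by tauto, by grind⟩
  · exact ⟨V₂, by tauto, by grind⟩
  · exact ⟨V₃, by tauto, by grind⟩

lemma isPartition_partsIn (hQ : IsPartition Q S) (h𝒱 : IsPartition 𝒱 S) (hQ𝒱 : Refines Q 𝒱)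
    (hV : V ∈ 𝒱) : IsPartition (partsIn Q V) V := by
  unfold partsIn
  convert hQ.filter_subset_of_refines h𝒱 hQ𝒱 hV

lemma refines_partsIn (hQP : Refines Q P) (hQ : IsPartition Q S) (h𝒱 : IsPartition 𝒱 S)
    (hP𝒱 : Refines P 𝒱) (hV : V ∈ 𝒱) : Refines (partsIn Q V) (partsIn P V) := by
  intro q hq
  obtain ⟨hqQ, hqV⟩ := mem_filter.1 hq
  obtain ⟨p, hp, hqp⟩ := hQP q hqQ
  obtain ⟨V', hV', hpV'⟩ := hP𝒱 p hp
  obtain ⟨x, hx⟩ := hQ.nonempty hqQ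
  obtain rfl := h𝒱.eq_of_mem hV hV' (hqV hx) (hpV' (hqp hx))
  exact ⟨p, mem_filter.2 ⟨hp, hpV'⟩, hqp⟩

lemma IsPartition.nonempty_of_card_partsIn_eq_tfn (hP : IsPartition P S)
    (hcard : #(partsIn P V) = tfn 1) : V.Nonempty := by
  have hpos : 0 < #(partsIn P V) := by
    rw [hcard, tfn_eq_two_pow_logTfn le_rfl]
    positivity
  obtain ⟨p, hp⟩ := card_pos.1 hpos
  obtain ⟨hpP, hpV⟩ := mem_filter.1 hp
  exact (hP.nonempty hpP).mono hpV

lemma exists_isLabelling_partsIn (h𝒱 : IsPartition 𝒱 S) (hV : V ∈ 𝒱)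
    {P : ℕ → Finset (Finset α)} {M : ℕ} (hpart : ∀ i, 1 ≤ i → i ≤ M → IsPartition (P i) S)
    (hequi : ∀ i, 1 ≤ i → i ≤ M → EquitableParts (P i))
    (hP𝒱 : ∀ i, 1 ≤ i → i ≤ M → Refines (P i) 𝒱)
    (href : ∀ i, 1 ≤ i → i < M → Refines (P (i + 1)) (P i))
    (hcard : ∀ i, 1 ≤ i → i ≤ M → #(partsIn (P i) V) = tfn i) :
    ∃ f, IsLabelling V logTfn M f ∧
      ∀ i, 1 ≤ i → i ≤ M → ∀ Q, IsPartition Q V → ∀ b : ℝ, b ≤ 1 →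
        (NearlyRefines b (f i) Q V ↔ ApproxRefines b Q (partsIn (P i) V) V) := by
  have hpartV : ∀ i, 1 ≤ i → i ≤ M → IsPartition (partsIn (P i) V) V := fun i hi hiM =>
    isPartition_partsIn (hpart i hi hiM) h𝒱 (hP𝒱 i hi hiM) hV
  obtain ⟨f, hf, hlabels⟩ := exists_isLabelling_logTfn (h𝒱.nonempty hV) hpartV
    (fun i hi hiM p hp q hq => hequi i hi hiM p (mem_filter.1 hp).1 q (mem_filter.1 hq).1)
    (fun i hi hiM =>
      refines_partsIn (href i hi hiM) (hpart _ le_add_self hiM) h𝒱 (hP𝒱 i hi hiM.le) hV)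
    hcard
  exact ⟨f, hf, fun i hi hiM Q hQ b hb =>
    (hlabels i hi hiM).nearlyRefines_iff (hpartV i hi hiM) hQ hb⟩

end Restriction

section TwoPartition

open Finset

variable {α : Type*} [DecidableEq α] {S V₁ V₂ : Finset α} {Z : Finset (Finset α)}
  {E : Finset (Finset (α × α))}

lemma ne_of_mem_partsIn (hZ : IsPartition Z S) (hV : Disjoint V₁ V₂) {p q : Finset α}
    (hp : p ∈ partsIn Z V₁) (hq : q ∈ partsIn Z V₂) : p ≠ q := by
  obtain ⟨hpZ, hpV⟩ := mem_filter.1 hp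
  rintro rfl
  exact (hZ.nonempty hpZ).ne_empty (disjoint_self.1 (hV.mono hpV (mem_filter.1 hq).2))

-- Empty graphs, which `E` may contain, are not parts.
lemma Is2Partition.isPartition_graphsIn (h : Is2Partition Z E S) (hV : Disjoint V₁ V₂)
    (hZ₁ : IsPartition (partsIn Z V₁) V₁) (hZ₂ : IsPartition (partsIn Z V₂) V₂) :
    IsPartition ((graphsIn E V₁ V₂).erase ∅) (V₁ ×ˢ V₂) := by
  obtain ⟨hZ, -, hdisj, hcover⟩ := h
  refine ⟨fun g hg => nonempty_iff_ne_empty.2 (ne_of_mem_erase hg),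
    fun g hg => (mem_filter.1 (mem_of_mem_erase hg)).2, fun e he => ?_⟩
  obtain ⟨p, hp, hep⟩ := hZ₁.exists_mem (mem_product.1 he).1
  obtain ⟨q, hq, heq⟩ := hZ₂.exists_mem (mem_product.1 he).2
  obtain ⟨g, hg, hgpq, heg⟩ := hcover p (mem_filter.1 hp).1 q (mem_filter.1 hq).1
    (ne_of_mem_partsIn hZ hV hp hq) e (mem_product.2 ⟨hep, heq⟩)
  have hgV := hgpq.trans (product_subset_product (mem_filter.1 hp).2 (mem_filter.1 hq).2)
  refine ⟨g, ⟨mem_erase.2 ⟨ne_empty_of_mem heg, mem_filter.2 ⟨hg, hgV⟩⟩, heg⟩, ?_⟩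
  rintro g' ⟨hg', heg'⟩
  by_contra hne
  exact disjoint_left.1 (hdisj g' (mem_filter.1 (mem_of_mem_erase hg')).1 g hg hne) heg' heg

lemma deltaReg_of_forall_notMem {α β : Type*} (δ : ℝ) {G : Finset (α × β)} {A : Finset α}
    {B : Finset β} (h : ∀ e ∈ G, e.1 ∈ A → e.2 ∉ B) : DeltaReg δ G A B := by
  have hzero : bmEdges G A B = 0 :=
    card_eq_zero.2 (filter_eq_empty_iff.2 fun e he hAB => h e he hAB.1 hAB.2)
  intro A' _ B' _ _ _
  rw [bmDens, bmDens, hzero, Nat.cast_zero, zero_div, mul_zero]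
  positivity

lemma Is2Partition.deltaReg_of_deltaGood {δ : ℝ} (h : Is2Partition Z E S) (hgood : DeltaGood δ Z E)
    {g : Finset (α × α)} (hg : g ∈ E) {p q : Finset α} (hp : p ∈ Z) (hq : q ∈ Z) (hpq : p ≠ q) :
    DeltaReg δ g p q := by
  obtain ⟨hZ, hE, -, -⟩ := h
  by_cases hgpq : g ⊆ p ×ˢ q
  · exact hgood g hg p hp q hq hpq hgpq
  obtain ⟨p', hp', q', hq', -, hgpq'⟩ := hE g hg
  refine deltaReg_of_forall_notMem δ fun e he hep heq => ?_
  obtain ⟨hep', heq'⟩ := mem_product.1 (hgpq' he)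
  obtain rfl := hZ.eq_of_mem hp hp' hep hep'
  obtain rfl := hZ.eq_of_mem hq hq' heq heq'
  exact hgpq hgpq'

end TwoPartition

section Hypergraph

open Finset

variable {α : Type*} {s : ℕ} {f₁ f₂ f₃ : ℕ → α → ℕ} {V₁ V₂ V₃ : Finset α}

/-- The 3-graph obtained by applying the colouring twice: first to `(V₁, V₂)`, where the partition
of `V₁` is one level finer than that of `V₂`, then to `(V₁ × V₂, V₃)`, where `V₁ × V₂` is
partitioned into the `2 ^ wstar j` colour classes at the level `j` belonging to level `wfn j` of
`V₃`. Its edges are those of the first colour. -/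
noncomputable def iteratedColourHypergraph (s : ℕ) (f₁ f₂ f₃ : ℕ → α → ℕ) (V₁ V₂ V₃ : Finset α) :
    Finset (α × α × α) :=
  {t ∈ V₁ ×ˢ V₂ ×ˢ V₃ | colour wstar (fun j => logTfn (wfn j)) s
    (pairColour (fun i => logTfn (shiftedLevel i)) logTfn wstar (fun i => f₁ (shiftedLevel i)) f₂ s
      (t.1, t.2.1)) (f₃ (wfn s) t.2.2) = 0}

lemma GH3_iteratedColourHypergraph [DecidableEq α] :
    GH3 (iteratedColourHypergraph s f₁ f₂ f₃ V₁ V₂ V₃) =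
      colourClass wstar (fun j => logTfn (wfn j))
        (pairColour (fun i => logTfn (shiftedLevel i)) logTfn wstar
          (fun i => f₁ (shiftedLevel i)) f₂)
        (fun j => f₃ (wfn j)) s 0 (V₁ ×ˢ V₂) V₃ := by
  ext ⟨⟨x, y⟩, z⟩
  simp [GH3, iteratedColourHypergraph, colourClass, and_assoc]

lemma card_GH3 [DecidableEq α] (H : Finset (α × α × α)) : #(GH3 H) = #H :=
  card_image_of_injective H (Equiv.prodAssoc α α α).symm.injective

lemma card_iteratedColourHypergraph (h₃ : IsLabelling V₃ logTfn (wstar s + 1) f₃) :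
    (#(iteratedColourHypergraph s f₁ f₂ f₃ V₁ V₂ V₃) : ℝ) = #V₁ * #V₂ * #V₃ / 2 ^ s := by
  rw [← card_GH3, GH3_iteratedColourHypergraph, card_colourClass (admissibleSizes_wstar s)
    (h₃.comp wfn_monotone ((wfn_le_wstar s).trans (Nat.le_succ _))) le_rfl (Nat.two_pow_pos s),
    card_product, Nat.cast_mul, mul_div_assoc]

theorem Delta3RegPartition.nearlyRefines_partsIn [DecidableEq α] (h₁₂ : Disjoint V₁ V₂)
    (h𝒱 : IsPartition {V₁, V₂, V₃} (V₁ ∪ V₂ ∪ V₃)) (h₁ : IsLabelling V₁ logTfn (wstar s + 1) f₁)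
    (h₂ : IsLabelling V₂ logTfn (wstar s + 1) f₂) (h₃ : IsLabelling V₃ logTfn (wstar s + 1) f₃)
    {Z : Finset (Finset α)} {E : Finset (Finset (α × α))}
    (hreg : Delta3RegPartition (1 / 2 ^ 70) (iteratedColourHypergraph s f₁ f₂ f₃ V₁ V₂ V₃)
      V₁ V₂ V₃ Z E) {i : ℕ} (hi : 1 ≤ i) (his : i ≤ wfn s)
    (hZ₃ : NearlyRefines (1 / 2 ^ 9) (f₃ i) (partsIn Z V₃) V₃)
    (hZ₂ : NearlyRefines (1 / 2 ^ 9) (f₂ i) (partsIn Z V₂) V₂) :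
    NearlyRefines (1 / 2 ^ 9) (f₁ (i + 1)) (partsIn Z V₁) V₁ := by
  obtain ⟨h2part, hZ𝒱, hgood, -, -, G', hG', hdiff, hG'reg⟩ := hreg
  obtain ⟨j, hjs, hji, hij⟩ := exists_wfn_le_le_wstar his
  have hwfn : wfn s ≤ wstar s + 1 := (wfn_le_wstar s).trans (Nat.le_succ _)
  have hpart : ∀ V ∈ ({V₁, V₂, V₃} : Finset (Finset α)), IsPartition (partsIn Z V) V :=
    fun V hV => isPartition_partsIn h2part.1 h𝒱 hZ𝒱 hV
  have hP₁ := hpart V₁ (by simp)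
  have hP₂ := hpart V₂ (by simp)
  have hP₃ := hpart V₃ (by simp)
  rw [← shiftedLevel_of_pos hi]
  refine .of_deltaRegPartition_pairColour (admissibleSizes_logTfn (wstar s))
    (h₁.comp shiftedLevel_monotone (shiftedLevel_le _))
    (h₂.comp monotone_id (Nat.le_succ _)) (h𝒱.nonempty (by simp)) wstar_monotone le_rfl
    (admissibleSizes_wstar s) (h₃.comp wfn_monotone hwfn)
    (h𝒱.nonempty (by simp)) hP₁ hP₂ hP₃ (h2part.isPartition_graphsIn h₁₂ hP₁ hP₂)
    (fun g hg p hp q hq => ?_) (Nat.two_pow_pos s) ?_ hjs hij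
    (hZ₃.of_level_le h₃ hji (his.trans hwfn) hP₃) hZ₂
  · exact h2part.deltaReg_of_deltaGood hgood (mem_filter.1 (mem_of_mem_erase hg)).1
      (mem_filter.1 hp).1 (mem_filter.1 hq).1 (ne_of_mem_partsIn h2part.1 h₁₂ hp hq)
  · rw [GH3_iteratedColourHypergraph] at hdiff
    exact ⟨G', hG', hdiff, fun g hg => hG'reg g (mem_of_mem_erase hg)⟩

end Hypergraph

/-- **Key argument (Lemma 3.5).** -/
theorem key_argument {α : Type*} [DecidableEq α] (s : ℕ)
    (V1 V2 V3 : Finset α)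
    (hd12 : Disjoint V1 V2) (hd13 : Disjoint V1 V3) (hd23 : Disjoint V2 V3)
    (hsize : V1.card = V2.card ∧ V2.card = V3.card)
    (m : ℕ) (hm : m = wstar s + 1)
    (Vp : ℕ → Finset (Finset α))
    (hpart : ∀ i, 1 ≤ i → i ≤ m → IsPartition (Vp i) (V1 ∪ V2 ∪ V3))
    (hequi : ∀ i, 1 ≤ i → i ≤ m → EquitableParts (Vp i))
    (hrefV : ∀ i, 1 ≤ i → i ≤ m → Refines (Vp i) {V1, V2, V3})
    (href : ∀ i, 1 ≤ i → i < m → Refines (Vp (i + 1)) (Vp i))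
    (hcount : ∀ i, 1 ≤ i → i ≤ m →
      (partsIn (Vp i) V1).card = tfn i ∧ (partsIn (Vp i) V2).card = tfn i ∧
        (partsIn (Vp i) V3).card = tfn i) :
    ∃ H : Finset (α × α × α),
      Is3Partite H V1 V2 V3 ∧
      (H.card : ℝ) = (2 : ℝ) ^ (-(s : ℤ)) * ((V1.card : ℝ) * (V2.card : ℝ) * (V3.card : ℝ)) ∧
      ∀ (Z : Finset (Finset α)) (E : Finset (Finset (α × α))),
        Delta3RegPartition ((2 : ℝ) ^ (-70 : ℤ)) H V1 V2 V3 Z E →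
        ∀ i, 1 ≤ i → i ≤ wfn s →
          ApproxRefines ((2 : ℝ) ^ (-9 : ℤ)) (partsIn Z V3) (partsIn (Vp i) V3) V3 →
          ApproxRefines ((2 : ℝ) ^ (-9 : ℤ)) (partsIn Z V2) (partsIn (Vp i) V2) V2 →
          ApproxRefines ((2 : ℝ) ^ (-9 : ℤ)) (partsIn Z V1) (partsIn (Vp (i + 1)) V1) V1 := by
  subst hm
  have h𝒱 : IsPartition {V1, V2, V3} (V1 ∪ V2 ∪ V3) := by
    have hpart₁ := hpart 1 le_rfl (Nat.le_add_left _ _)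
    obtain ⟨h₁, h₂, h₃⟩ := hcount 1 le_rfl (Nat.le_add_left _ _)
    exact isPartition_triple hd12 hd13 hd23 (hpart₁.nonempty_of_card_partsIn_eq_tfn h₁)
      (hpart₁.nonempty_of_card_partsIn_eq_tfn h₂) (hpart₁.nonempty_of_card_partsIn_eq_tfn h₃)
  have exists_labelling := fun V hV hcard =>
    exists_isLabelling_partsIn (V := V) h𝒱 hV hpart hequi hrefV href hcard
  obtain ⟨f₁, hf₁, hiff₁⟩ := exists_labelling V1 (by simp) fun i hi him => (hcount i hi him).1
  obtain ⟨f₂, hf₂, hiff₂⟩ := exists_labelling V2 (by simp) fun i hi him => (hcount i hi him).2.1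
  obtain ⟨f₃, hf₃, hiff₃⟩ := exists_labelling V3 (by simp) fun i hi him => (hcount i hi him).2.2
  refine ⟨iteratedColourHypergraph s f₁ f₂ f₃ V1 V2 V3,
    ⟨⟨hd12, hd13, hd23⟩, Finset.filter_subset _ _⟩, ?_, fun Z E hreg i hi his hZ₃ hZ₂ => ?_⟩
  · rw [card_iteratedColourHypergraph hf₃, zpow_neg, zpow_natCast, div_eq_inv_mul]
  rw [show (2 : ℝ) ^ (-70 : ℤ) = 1 / 2 ^ 70 by norm_num] at hreg
  rw [show (2 : ℝ) ^ (-9 : ℤ) = 1 / 2 ^ 9 by norm_num] at hZ₃ hZ₂ ⊢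
  have hZpart : ∀ V ∈ ({V1, V2, V3} : Finset (Finset α)), IsPartition (partsIn Z V) V :=
    fun V hV => isPartition_partsIn hreg.1.1 h𝒱 hreg.2.1 hV
  have hiw : i ≤ wstar s := his.trans (wfn_le_wstar s)
  rw [← hiff₃ i hi (by omega) _ (hZpart V3 (by simp)) _ (by norm_num)] at hZ₃
  rw [← hiff₂ i hi (by omega) _ (hZpart V2 (by simp)) _ (by norm_num)] at hZ₂
  rw [← hiff₁ (i + 1) le_add_self (by omega) _ (hZpart V1 (by simp)) _ (by norm_num)]
  exact hreg.nearlyRefines_partsIn hd12 h𝒱 hf₁ hf₂ hf₃ hi his hZ₃ hZ₂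
end

section
/- Let Q and P be partitions of the same finite set with Q ≺_δ P. Then there exist a part P ∈ P and a set Q that is a union of members of Q such that |P △ Q| ≤ 3δ|P|. -/
open scoped Classical

/-!
Send each `q ∈ Q` with `q ∈_δ P` to a part `f q ∈ P` with `q ⊆_δ f q`, and compare each `p ∈ P`
with the union `U p` of the members of `Q` sent to it. A point `v` of a member `q` that is sent
somewhere lies in some `p ∆ U p` only if `v ∈ q \ f q`, and then for exactly two parts: the one
containing `v`, and `f q`. A point of a member that is not sent anywhere lies in one `p ∆ U p`.
Hence `∑ p, |p ∆ U p| ≤ δ|S| + 2δ|S| = 3δ ∑ p, |p|`, and some part does at least as well as the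
average.
-/

open Finset

open scoped symmDiff

section FiberUnion

variable {α : Type*} [DecidableEq α]

/-- The union of the members of `G` that the assignment `f` sends to `p`. It serves as the
approximation of the part `p` by members of `G`. -/
def fiberUnion (G : Finset (Finset α)) (f : Finset α → Finset α) (p : Finset α) : Finset α :=
  {q ∈ G | f q = p}.biUnion id

variable {G P Q : Finset (Finset α)} {f : Finset α → Finset α} {p : Finset α} {v : α}

theorem mem_fiberUnion : v ∈ fiberUnion G f p ↔ ∃ q ∈ G, f q = p ∧ v ∈ q := by
  simp only [fiberUnion, mem_biUnion, mem_filter, id, and_assoc]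

theorem fiberUnion_sdiff_subset :
    fiberUnion G f p \ p ⊆ {q ∈ G | f q = p}.biUnion fun q => q \ f q := by
  intro v hv
  obtain ⟨hvU, hvp⟩ := mem_sdiff.1 hv
  obtain ⟨q, hq, rfl, hvq⟩ := mem_fiberUnion.1 hvU
  exact mem_biUnion.2 ⟨q, mem_filter.2 ⟨hq, rfl⟩, mem_sdiff.2 ⟨hvq, hvp⟩⟩

theorem sum_card_fiberUnion_sdiff_le (G P : Finset (Finset α)) (f : Finset α → Finset α) :
    ∑ p ∈ P, #(fiberUnion G f p \ p) ≤ ∑ q ∈ G, #(q \ f q) :=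
  calc ∑ p ∈ P, #(fiberUnion G f p \ p)
      ≤ ∑ p ∈ P, ∑ q ∈ G with f q = p, #(q \ f q) :=
        sum_le_sum fun _ _ => (card_le_card fiberUnion_sdiff_subset).trans card_biUnion_le
    _ ≤ ∑ q ∈ G, #(q \ f q) :=
        sum_fiberwise_le_sum_of_sum_fiber_nonneg fun _ _ => Nat.zero_le _

theorem biUnion_sdiff_fiberUnion_subset (hP : (P : Set (Finset α)).PairwiseDisjoint id)
    (hPQ : P.biUnion id ⊆ Q.biUnion id) (hf : ∀ q ∈ G, f q ∈ P) :
    (P.biUnion fun p => p \ fiberUnion G f p) ⊆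
      (Q \ G).biUnion id ∪ G.biUnion fun q => q \ f q := by
  intro v hv
  obtain ⟨p, hp, hvpU⟩ := mem_biUnion.1 hv
  obtain ⟨hvp, hvU⟩ := mem_sdiff.1 hvpU
  obtain ⟨q, hq, hvq⟩ := mem_biUnion.1 (hPQ (mem_biUnion.2 ⟨p, hp, hvp⟩))
  by_cases hqG : q ∈ G
  · have hvfq : v ∉ f q := fun hvfq =>
      hvU (mem_fiberUnion.2 ⟨q, hqG, hP.elim_finset (hf q hqG) hp v hvfq hvp, hvq⟩)
    exact mem_union_right _ (mem_biUnion.2 ⟨q, hqG, mem_sdiff.2 ⟨hvq, hvfq⟩⟩)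
  · exact mem_union_left _ (mem_biUnion.2 ⟨q, mem_sdiff.2 ⟨hq, hqG⟩, hvq⟩)

theorem sum_card_sdiff_fiberUnion_le (hP : (P : Set (Finset α)).PairwiseDisjoint id)
    (hPQ : P.biUnion id ⊆ Q.biUnion id) (hf : ∀ q ∈ G, f q ∈ P) :
    ∑ p ∈ P, #(p \ fiberUnion G f p) ≤ ∑ q ∈ Q \ G, #q + ∑ q ∈ G, #(q \ f q) :=
  calc ∑ p ∈ P, #(p \ fiberUnion G f p)
      = #(P.biUnion fun p => p \ fiberUnion G f p) :=
        (card_biUnion (hP.mono fun _ => sdiff_subset)).symm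
    _ ≤ #((Q \ G).biUnion id ∪ G.biUnion fun q => q \ f q) :=
        card_le_card (biUnion_sdiff_fiberUnion_subset hP hPQ hf)
    _ ≤ #((Q \ G).biUnion id) + #(G.biUnion fun q => q \ f q) := card_union_le _ _
    _ ≤ ∑ q ∈ Q \ G, #q + ∑ q ∈ G, #(q \ f q) := add_le_add card_biUnion_le card_biUnion_le

theorem sum_card_symmDiff_fiberUnion_le (hP : (P : Set (Finset α)).PairwiseDisjoint id)
    (hPQ : P.biUnion id ⊆ Q.biUnion id) (hf : ∀ q ∈ G, f q ∈ P) :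
    ∑ p ∈ P, #(p ∆ fiberUnion G f p) ≤ ∑ q ∈ Q \ G, #q + 2 * ∑ q ∈ G, #(q \ f q) :=
  calc ∑ p ∈ P, #(p ∆ fiberUnion G f p)
      ≤ ∑ p ∈ P, (#(p \ fiberUnion G f p) + #(fiberUnion G f p \ p)) :=
        sum_le_sum fun _ _ => card_union_le _ _
    _ = ∑ p ∈ P, #(p \ fiberUnion G f p) + ∑ p ∈ P, #(fiberUnion G f p \ p) := sum_add_distrib
    _ ≤ (∑ q ∈ Q \ G, #q + ∑ q ∈ G, #(q \ f q)) + ∑ q ∈ G, #(q \ f q) :=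
        add_le_add (sum_card_sdiff_fiberUnion_le hP hPQ hf) (sum_card_fiberUnion_sdiff_le G P f)
    _ = ∑ q ∈ Q \ G, #q + 2 * ∑ q ∈ G, #(q \ f q) := by ring

end FiberUnion

section Partition

variable {α : Type*} {S : Finset α} {P Q : Finset (Finset α)} {δ : ℝ}

namespace IsPartition

/-- The bundled `Finpartition` with parts `P`, which gives access to the library on partitions. -/
def toFinpartition [DecidableEq α] (hP : IsPartition P S) : Finpartition S :=
  .ofExistsUnique P hP.2.1 hP.2.2 fun h => not_nonempty_empty (hP.1 ∅ h)

theorem pairwiseDisjoint_s7 (hP : IsPartition P S) : (P : Set (Finset α)).PairwiseDisjoint id :=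
  hP.toFinpartition.disjoint

theorem biUnion_eq [DecidableEq α] (hP : IsPartition P S) : P.biUnion id = S :=
  hP.toFinpartition.biUnion_parts

theorem sum_card_eq (hP : IsPartition P S) : ∑ p ∈ P, #p = #S :=
  hP.toFinpartition.sum_card_parts

theorem nonempty_s7 (hP : IsPartition P S) (hS : S.Nonempty) : P.Nonempty :=
  hP.toFinpartition.parts_nonempty hS.ne_empty

end IsPartition

variable [DecidableEq α]

namespace ApproxRefines

theorem nonneg (href : ApproxRefines δ Q P S) (hS : S.Nonempty) : 0 ≤ δ :=
  nonneg_of_mul_nonneg_left ((sum_nonneg fun _ _ => Nat.cast_nonneg _).trans href)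
    (Nat.cast_pos.2 hS.card_pos)

theorem exists_assignment (href : ApproxRefines δ Q P S) :
    ∃ G ⊆ Q, ∃ f : Finset α → Finset α, (∀ q ∈ G, f q ∈ P) ∧ (∀ q ∈ G, ApproxSub δ q (f q)) ∧
      ∑ q ∈ Q \ G, (#q : ℝ) ≤ δ * #S := by
  have exists_part : ∀ q, ApproxMem δ q P → ∃ p ∈ P, ApproxSub δ q p := fun _ => id
  choose! f hfP hfδ using exists_part
  refine ⟨{q ∈ Q | ApproxMem δ q P}, filter_subset _ _, f,
    fun q hq => hfP q (mem_filter.1 hq).2, fun q hq => hfδ q (mem_filter.1 hq).2, ?_⟩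
  rw [← filter_not]
  exact href

end ApproxRefines

theorem sum_card_sdiff_le_of_approxSub {G : Finset (Finset α)} {f : Finset α → Finset α}
    (hQ : IsPartition Q S) (hδ : 0 ≤ δ) (hGQ : G ⊆ Q) (hf : ∀ q ∈ G, ApproxSub δ q (f q)) :
    ∑ q ∈ G, (#(q \ f q) : ℝ) ≤ δ * #S :=
  calc ∑ q ∈ G, (#(q \ f q) : ℝ)
      ≤ ∑ q ∈ G, δ * (#q : ℝ) := sum_le_sum fun q hq => (hf q hq).le
    _ ≤ ∑ q ∈ Q, δ * (#q : ℝ) := sum_le_sum_of_subset_of_nonneg hGQ fun _ _ _ => by positivity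
    _ = δ * #S := by rw [← mul_sum, ← hQ.sum_card_eq, Nat.cast_sum]

theorem ApproxRefines.exists_sum_card_symmDiff_fiberUnion_le (href : ApproxRefines δ Q P S)
    (hS : S.Nonempty) (hQ : IsPartition Q S) (hP : IsPartition P S) :
    ∃ G ⊆ Q, ∃ f : Finset α → Finset α,
      ∑ p ∈ P, (#(p ∆ fiberUnion G f p) : ℝ) ≤ 3 * δ * #S := by
  obtain ⟨G, hGQ, f, hfP, hfδ, hunassigned⟩ := href.exists_assignment
  refine ⟨G, hGQ, f, ?_⟩
  have hcover : P.biUnion id ⊆ Q.biUnion id := by rw [hP.biUnion_eq, hQ.biUnion_eq]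
  have hassigned : ∑ q ∈ G, (#(q \ f q) : ℝ) ≤ δ * #S :=
    sum_card_sdiff_le_of_approxSub hQ (href.nonneg hS) hGQ hfδ
  calc ∑ p ∈ P, (#(p ∆ fiberUnion G f p) : ℝ)
      ≤ ∑ q ∈ Q \ G, (#q : ℝ) + 2 * ∑ q ∈ G, (#(q \ f q) : ℝ) := by
        exact_mod_cast sum_card_symmDiff_fiberUnion_le hP.pairwiseDisjoint_s7 hcover hfP
    _ ≤ δ * #S + 2 * (δ * #S) := by gcongr
    _ = 3 * δ * #S := by ring

end Partition

/-- **Claim 3.2.** If `Q ≺_δ P` then there are `p ∈ P` and a union `q` of members of `Q`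
with `|p △ q| ≤ 3δ|p|`. -/
theorem approx_refinement_union {α : Type*} [DecidableEq α]
    (S : Finset α) (hS : S.Nonempty) (Q P : Finset (Finset α))
    (hQ : IsPartition Q S) (hP : IsPartition P S)
    (δ : ℝ) (href : ApproxRefines δ Q P S) :
    ∃ p ∈ P, ∃ T ⊆ Q,
      (((p \ T.biUnion id) ∪ (T.biUnion id \ p)).card : ℝ) ≤ 3 * δ * (p.card : ℝ) := by
  obtain ⟨G, hGQ, f, htotal⟩ := href.exists_sum_card_symmDiff_fiberUnion_le hS hQ hP
  have hsum : ∑ p ∈ P, (#(p ∆ fiberUnion G f p) : ℝ) ≤ ∑ p ∈ P, 3 * δ * (#p : ℝ) := by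
    rwa [← hP.sum_card_eq, Nat.cast_sum, mul_sum] at htotal
  obtain ⟨p, hp, hle⟩ := exists_le_of_sum_le (hP.nonempty_s7 hS) hsum
  exact ⟨p, hp, {q ∈ G | f q = p}, (filter_subset _ _).trans hGQ, hle⟩
end
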